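/- Let k be a field of characteristic p > 0. Let X (resp. Y) be a scheme of finite type over k equipped with an action of an infinitesimal group scheme I (resp. J). Then the product morphism φ_{X,I} × φ_{Y,J} : X × Y → X/I × Y/J factors uniquely through an isomorphism (X × Y)/(I × J) ≅ X/I × Y/J, where I × J acts componentwise on X × Y. -/

import Mathlib

open AlgebraicGeometry CategoryTheory CategoryTheory.Limits Opposite

universe u

noncomputable section

/-- The spectrum of the field `k`, the base of all schemes considered. -/
abbrev Spk (k : Type u) [Field k] : Scheme.{u} := Spec (CommRingCat.of k)

/-- A scheme over the field `k`: a scheme together with a structure morphism to `Spec k`. -/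
structure SchemeOver (k : Type u) [Field k] : Type (u + 1) where
  carrier : Scheme.{u}
  str : carrier ⟶ Spk k

variable (k : Type u) [Field k]

/-- A group scheme over `k`, presented via its functor of points: for every scheme `T`
and every pair of `T`-points lying over the same `T`-point of `Spec k`, a product point,
together with unit and inverse, satisfying the group axioms functorially. -/
structure GroupSchemeOver extends SchemeOver k where
  mul : ∀ {T : Scheme.{u}} (a b : T ⟶ carrier), a ≫ str = b ≫ str → (T ⟶ carrier)
  one : Spk k ⟶ carrier
  inv : ∀ {T : Scheme.{u}}, (T ⟶ carrier) → (T ⟶ carrier)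
  mul_str : ∀ {T : Scheme.{u}} (a b : T ⟶ carrier) (h), mul a b h ≫ str = a ≫ str
  one_str : one ≫ str = 𝟙 (Spk k)
  inv_str : ∀ {T : Scheme.{u}} (a : T ⟶ carrier), inv a ≫ str = a ≫ str
  mul_natural : ∀ {T' T : Scheme.{u}} (g : T' ⟶ T) (a b : T ⟶ carrier) (h h'),
    g ≫ mul a b h = mul (g ≫ a) (g ≫ b) h'
  inv_natural : ∀ {T' T : Scheme.{u}} (g : T' ⟶ T) (a : T ⟶ carrier),
    g ≫ inv a = inv (g ≫ a)
  mul_assoc : ∀ {T : Scheme.{u}} (a b c : T ⟶ carrier) (h₁ h₂ h₃ h₄),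
    mul (mul a b h₁) c h₂ = mul a (mul b c h₃) h₄
  one_mul : ∀ {T : Scheme.{u}} (a : T ⟶ carrier) (h), mul (a ≫ str ≫ one) a h = a
  mul_one : ∀ {T : Scheme.{u}} (a : T ⟶ carrier) (h), mul a (a ≫ str ≫ one) h = a
  inv_mul : ∀ {T : Scheme.{u}} (a : T ⟶ carrier) (h), mul (inv a) a h = a ≫ str ≫ one

variable {k}

theorem GroupSchemeOver.mul_congr (G : GroupSchemeOver k) {T : Scheme.{u}}
    {a a' b b' : T ⟶ G.carrier} (ha : a = a') (hb : b = b') (h h') :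
    G.mul a b h = G.mul a' b' h' := by subst ha; subst hb; rfl

/-- A homomorphism of group schemes over `k`. -/
structure GroupHom (G H : GroupSchemeOver k) where
  hom : G.carrier ⟶ H.carrier
  hom_str : hom ≫ H.str = G.str
  hom_one : G.one ≫ hom = H.one
  hom_mul : ∀ {T : Scheme.{u}} (a b : T ⟶ G.carrier) (h h'),
    G.mul a b h ≫ hom = H.mul (a ≫ hom) (b ≫ hom) h'

/-- An action of a group scheme `G` over `k` on a scheme `X` over `k`, presented via
its functor of points. -/
structure ActionOver (G : GroupSchemeOver k) (X : SchemeOver k) where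
  act : ∀ {T : Scheme.{u}} (g : T ⟶ G.carrier) (x : T ⟶ X.carrier),
    g ≫ G.str = x ≫ X.str → (T ⟶ X.carrier)
  act_str : ∀ {T : Scheme.{u}} (g : T ⟶ G.carrier) (x : T ⟶ X.carrier) (h),
    act g x h ≫ X.str = x ≫ X.str
  act_natural : ∀ {T' T : Scheme.{u}} (f : T' ⟶ T) (g : T ⟶ G.carrier)
    (x : T ⟶ X.carrier) (h h'), f ≫ act g x h = act (f ≫ g) (f ≫ x) h'
  one_act : ∀ {T : Scheme.{u}} (x : T ⟶ X.carrier) (h), act (x ≫ X.str ≫ G.one) x h = x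
  mul_act : ∀ {T : Scheme.{u}} (g g' : T ⟶ G.carrier) (x : T ⟶ X.carrier) (h₁ h₂ h₃ h₄),
    act (G.mul g g' h₁) x h₂ = act g (act g' x h₃) h₄

theorem ActionOver.act_congr {G : GroupSchemeOver k} {X : SchemeOver k}
    (α : ActionOver G X) {T : Scheme.{u}} {g g' : T ⟶ G.carrier} {x x' : T ⟶ X.carrier}
    (hg : g = g') (hx : x = x') (h h') : α.act g x h = α.act g' x' h' := by
  subst hg; subst hx; rfl

/-- The action of a group scheme on itself by left translations. -/
def GroupSchemeOver.selfAction (G : GroupSchemeOver k) : ActionOver G G.toSchemeOver where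
  act g x h := G.mul g x h
  act_str g x h := (G.mul_str g x h).trans h
  act_natural f g x h h' := G.mul_natural f g x h h'
  one_act x h := G.one_mul x h
  mul_act g g' x h₁ h₂ h₃ h₄ := G.mul_assoc g g' x h₁ h₂ h₃ h₄

/-- Restriction of an action along a homomorphism of group schemes. -/
def ActionOver.res {G H : GroupSchemeOver k} {X : SchemeOver k} (φ : GroupHom H G)
    (α : ActionOver G X) : ActionOver H X where
  act g x h := α.act (g ≫ φ.hom) x (by rw [Category.assoc, φ.hom_str, h])
  act_str g x h := α.act_str _ _ _
  act_natural f g x h h' := by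
    refine (α.act_natural f (g ≫ φ.hom) x _ ?_).trans (α.act_congr ?_ rfl _ _)
    · simp only [Category.assoc, φ.hom_str, ← h']
    · simp only [Category.assoc]
  one_act x h := by
    refine (α.act_congr ?_ rfl _ ?_).trans (α.one_act x ?_)
    · simp only [Category.assoc, φ.hom_one]
    · simp only [Category.assoc, G.one_str, Category.comp_id]
    · simp only [Category.assoc, G.one_str, Category.comp_id]
  mul_act g g' x h₁ h₂ h₃ h₄ := by
    have hg : g ≫ H.str = x ≫ X.str := (H.mul_str g g' h₁).symm.trans h₂
    have hg' : g' ≫ H.str = x ≫ X.str := h₁.symm.trans hg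
    have p1 : (g ≫ φ.hom) ≫ G.str = (g' ≫ φ.hom) ≫ G.str := by
      simp only [Category.assoc, φ.hom_str]; exact h₁
    have p3 : (g' ≫ φ.hom) ≫ G.str = x ≫ X.str := by
      simp only [Category.assoc, φ.hom_str]; exact hg'
    refine (α.act_congr (φ.hom_mul g g' h₁ p1) rfl _ ?_).trans
      (α.mul_act (g ≫ φ.hom) (g' ≫ φ.hom) x p1 ?_ p3 ?_)
    · rw [G.mul_str]
      simp only [Category.assoc, φ.hom_str]; exact hg
    · rw [G.mul_str]
      simp only [Category.assoc, φ.hom_str]; exact hg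
    · rw [α.act_str]
      simp only [Category.assoc, φ.hom_str]; exact hg
/-! ### Vector bundles and line bundles, geometrically -/

/-- The data underlying a (geometric) vector bundle on a scheme `X`: a total space `π : tot ⟶ X`
together with a fiberwise `Γ(T, ⊤)`-module structure on the `T`-points of `tot` over a fixed
`T`-point of `X`, functorially in `T`. -/
structure VecBundleData (X : Scheme.{u}) : Type (u + 1) where
  tot : Scheme.{u}
  π : tot ⟶ X
  zero : X ⟶ tot
  zero_π : zero ≫ π = 𝟙 X
  add : ∀ {T : Scheme.{u}} (a b : T ⟶ tot), a ≫ π = b ≫ π → (T ⟶ tot)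
  smul : ∀ {T : Scheme.{u}} (f : Γ(T, ⊤)) (a : T ⟶ tot), T ⟶ tot
  add_π : ∀ {T : Scheme.{u}} (a b : T ⟶ tot) (h), add a b h ≫ π = a ≫ π
  smul_π : ∀ {T : Scheme.{u}} (f : Γ(T, ⊤)) (a : T ⟶ tot), smul f a ≫ π = a ≫ π
  add_natural : ∀ {T' T : Scheme.{u}} (g : T' ⟶ T) (a b : T ⟶ tot) (h h'),
    g ≫ add a b h = add (g ≫ a) (g ≫ b) h'
  smul_natural : ∀ {T' T : Scheme.{u}} (g : T' ⟶ T) (f : Γ(T, ⊤)) (a : T ⟶ tot),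
    g ≫ smul f a = smul (g.appTop f) (g ≫ a)
  add_comm : ∀ {T : Scheme.{u}} (a b : T ⟶ tot) (h h'), add a b h = add b a h'
  add_assoc : ∀ {T : Scheme.{u}} (a b c : T ⟶ tot) (h₁ h₂ h₃ h₄),
    add (add a b h₁) c h₂ = add a (add b c h₃) h₄
  zero_add : ∀ {T : Scheme.{u}} (a : T ⟶ tot) (h), add ((a ≫ π) ≫ zero) a h = a
  one_smul : ∀ {T : Scheme.{u}} (a : T ⟶ tot), smul 1 a = a
  mul_smul : ∀ {T : Scheme.{u}} (f g : Γ(T, ⊤)) (a : T ⟶ tot), smul (f * g) a = smul f (smul g a)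
  smul_add : ∀ {T : Scheme.{u}} (f : Γ(T, ⊤)) (a b : T ⟶ tot) (h h'),
    smul f (add a b h) = add (smul f a) (smul f b) h'
  add_smul : ∀ {T : Scheme.{u}} (f g : Γ(T, ⊤)) (a : T ⟶ tot) (h),
    smul (f + g) a = add (smul f a) (smul g a) h
  zero_smul : ∀ {T : Scheme.{u}} (a : T ⟶ tot), smul 0 a = (a ≫ π) ≫ zero
  smul_zero : ∀ {T : Scheme.{u}} (f : Γ(T, ⊤)) (x : T ⟶ X), smul f (x ≫ zero) = x ≫ zero

namespace VecBundleData

variable {X : Scheme.{u}} (E : VecBundleData X)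

theorem add_congr {T : Scheme.{u}} {a a' b b' : T ⟶ E.tot} (ha : a = a') (hb : b = b')
    (h h') : E.add a b h = E.add a' b' h' := by subst ha; subst hb; rfl

/-- The fiber of a vector bundle over a `T`-point of the base. -/
abbrev Fiber {T : Scheme.{u}} (x : T ⟶ X) : Type u := { a : T ⟶ E.tot // a ≫ E.π = x }

instance fiberZero {T : Scheme.{u}} (x : T ⟶ X) : Zero (E.Fiber x) :=
  ⟨⟨x ≫ E.zero, by rw [Category.assoc, E.zero_π, Category.comp_id]⟩⟩

instance fiberAdd {T : Scheme.{u}} (x : T ⟶ X) : Add (E.Fiber x) :=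
  ⟨fun a b => ⟨E.add a.1 b.1 (a.2.trans b.2.symm), (E.add_π _ _ _).trans a.2⟩⟩

instance fiberSMul {T : Scheme.{u}} (x : T ⟶ X) : SMul Γ(T, ⊤) (E.Fiber x) :=
  ⟨fun f a => ⟨E.smul f a.1, (E.smul_π _ _).trans a.2⟩⟩

@[simp] theorem coe_fiber_zero {T : Scheme.{u}} (x : T ⟶ X) :
    ((0 : E.Fiber x) : T ⟶ E.tot) = x ≫ E.zero := rfl

@[simp] theorem coe_fiber_add {T : Scheme.{u}} (x : T ⟶ X) (a b : E.Fiber x) :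
    ((a + b : E.Fiber x) : T ⟶ E.tot) = E.add a.1 b.1 (a.2.trans b.2.symm) := rfl

@[simp] theorem coe_fiber_smul {T : Scheme.{u}} (x : T ⟶ X) (f : Γ(T, ⊤)) (a : E.Fiber x) :
    ((f • a : E.Fiber x) : T ⟶ E.tot) = E.smul f a.1 := rfl

instance {T : Scheme.{u}} (x : T ⟶ X) : AddCommMonoid (E.Fiber x) where
  add_assoc a b c := Subtype.ext (E.add_assoc _ _ _ _ _ _ _)
  add_comm a b := Subtype.ext (E.add_comm _ _ _ _)
  zero_add a := Subtype.ext (by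
    have hz : ((a.1 ≫ E.π) ≫ E.zero) ≫ E.π = a.1 ≫ E.π := by
      rw [Category.assoc, E.zero_π, Category.comp_id]
    show E.add (x ≫ E.zero) a.1 _ = a.1
    exact (E.add_congr (by rw [a.2]) rfl _ hz).trans (E.zero_add a.1 hz))
  add_zero a := Subtype.ext (by
    have hz : ((a.1 ≫ E.π) ≫ E.zero) ≫ E.π = a.1 ≫ E.π := by
      rw [Category.assoc, E.zero_π, Category.comp_id]
    have hz' : (x ≫ E.zero) ≫ E.π = a.1 ≫ E.π := by
      rw [Category.assoc, E.zero_π, Category.comp_id, a.2]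
    show E.add a.1 (x ≫ E.zero) _ = a.1
    exact (E.add_comm _ _ _ hz').trans
      ((E.add_congr (by rw [a.2]) rfl _ hz).trans (E.zero_add a.1 hz)))
  nsmul := nsmulRec
  nsmul_zero _ := rfl
  nsmul_succ _ _ := rfl

instance {T : Scheme.{u}} (x : T ⟶ X) : Module Γ(T, ⊤) (E.Fiber x) where
  one_smul a := Subtype.ext (E.one_smul a.1)
  mul_smul f g a := Subtype.ext (E.mul_smul f g a.1)
  smul_zero f := Subtype.ext (E.smul_zero f x)
  smul_add f a b := Subtype.ext (E.smul_add f a.1 b.1 _ _)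
  add_smul f g a := Subtype.ext (E.add_smul f g a.1 _)
  zero_smul a := Subtype.ext ((E.zero_smul a.1).trans (by rw [a.2]; rfl))

/-- A family of `n` local sections of `E` over an open subset `U` is a frame if every point
of the total space over `U` is, in a unique way, a linear combination of these sections. -/
def IsFrame {n : ℕ} (U : X.Opens) (s : Fin n → (U.toScheme ⟶ E.tot)) : Prop :=
  ∃ hs : ∀ i, s i ≫ E.π = U.ι,
    ∀ {T : Scheme.{u}} (x : T ⟶ U.toScheme),
      Function.Bijective (fun f : Fin n → Γ(T, ⊤) =>
        (∑ i, f i • (⟨x ≫ s i, by rw [Category.assoc, hs i]⟩ : E.Fiber (x ≫ U.ι))))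

/-- A family of `n` global sections of `E` is a global frame if every point of the total
space is, in a unique way, a linear combination of these sections. -/
def IsGlobalFrame {n : ℕ} (s : Fin n → (X ⟶ E.tot)) : Prop :=
  ∃ hs : ∀ i, s i ≫ E.π = 𝟙 X,
    ∀ {T : Scheme.{u}} (x : T ⟶ X),
      Function.Bijective (fun f : Fin n → Γ(T, ⊤) =>
        (∑ i, f i • (⟨x ≫ s i, by rw [Category.assoc, hs i, Category.comp_id]⟩ : E.Fiber x)))

end VecBundleData

/-- A (geometric) vector bundle of rank `n` on `X`: bundle data which is locally trivial,
i.e. admits local frames around every point of `X`. -/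
structure VecBundle (n : ℕ) (X : Scheme.{u}) extends VecBundleData X where
  locTriv : ∀ x : X, ∃ (U : X.Opens) (s : Fin n → (U.toScheme ⟶ tot)),
    x ∈ U ∧ toVecBundleData.IsFrame U s

/-- A (geometric) line bundle on a scheme. -/
abbrev LineBundle (X : Scheme.{u}) := VecBundle 1 X

/-- A morphism of total spaces of vector bundles over `X` is linear if it commutes with the
projections, the fiberwise additions and the fiberwise scalar multiplications. -/
def IsLinearHom {X : Scheme.{u}} (E F : VecBundleData X) (φ : E.tot ⟶ F.tot) : Prop :=
  (φ ≫ F.π = E.π) ∧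
  (∀ {T : Scheme.{u}} (a b : T ⟶ E.tot) (h h'), E.add a b h ≫ φ = F.add (a ≫ φ) (b ≫ φ) h') ∧
  (∀ {T : Scheme.{u}} (f : Γ(T, ⊤)) (a : T ⟶ E.tot), E.smul f a ≫ φ = F.smul f (a ≫ φ))

/-- Two vector bundles on `X` are isomorphic if there is a linear isomorphism between them. -/
def VBIso {X : Scheme.{u}} {n m : ℕ} (E : VecBundle n X) (F : VecBundle m X) : Prop :=
  ∃ φ : E.tot ⟶ F.tot, IsLinearHom E.toVecBundleData F.toVecBundleData φ ∧ IsIso φ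

/-- `F` is a pullback of the vector bundle `E` along `g : Y ⟶ X`. -/
def IsPullbackBundle {Y X : Scheme.{u}} (g : Y ⟶ X) {n : ℕ} (E : VecBundle n X)
    (F : VecBundle n Y) : Prop :=
  ∃ τ : F.tot ⟶ E.tot,
    (τ ≫ E.π = F.π ≫ g) ∧
    (∀ {T : Scheme.{u}} (a b : T ⟶ F.tot) (h h'), F.add a b h ≫ τ = E.add (a ≫ τ) (b ≫ τ) h') ∧
    (∀ {T : Scheme.{u}} (f : Γ(T, ⊤)) (a : T ⟶ F.tot), F.smul f a ≫ τ = E.smul f (a ≫ τ)) ∧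
    (∀ {T : Scheme.{u}} (y : T ⟶ Y) (a : T ⟶ E.tot), a ≫ E.π = y ≫ g →
      ∃! b : T ⟶ F.tot, b ≫ F.π = y ∧ b ≫ τ = a)

/-- A vector bundle is trivial if it admits a global frame. -/
def IsTrivialBundle {X : Scheme.{u}} {n : ℕ} (E : VecBundle n X) : Prop :=
  ∃ s : Fin n → (X ⟶ E.tot), E.toVecBundleData.IsGlobalFrame s

/-- `N` is a tensor product of the line bundles `L` and `M`: witnessed by a fiberwise
bilinear pairing taking local frames to local frames. -/
def IsTensor {X : Scheme.{u}} (L M N : LineBundle X) : Prop :=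
  ∃ β : ∀ {T : Scheme.{u}} (a : T ⟶ L.tot) (b : T ⟶ M.tot), a ≫ L.π = b ≫ M.π → (T ⟶ N.tot),
    (∀ {T : Scheme.{u}} (a : T ⟶ L.tot) (b : T ⟶ M.tot) (h), β a b h ≫ N.π = a ≫ L.π) ∧
    (∀ {T' T : Scheme.{u}} (g : T' ⟶ T) (a : T ⟶ L.tot) (b : T ⟶ M.tot) (h h'),
      g ≫ β a b h = β (g ≫ a) (g ≫ b) h') ∧
    (∀ {T : Scheme.{u}} (a a' : T ⟶ L.tot) (b : T ⟶ M.tot) (h₁ h₂ h₃ h₄ h₅),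
      β (L.add a a' h₁) b h₂ = N.add (β a b h₃) (β a' b h₄) h₅) ∧
    (∀ {T : Scheme.{u}} (a : T ⟶ L.tot) (b b' : T ⟶ M.tot) (h₁ h₂ h₃ h₄ h₅),
      β a (M.add b b' h₁) h₂ = N.add (β a b h₃) (β a b' h₄) h₅) ∧
    (∀ {T : Scheme.{u}} (f : Γ(T, ⊤)) (a : T ⟶ L.tot) (b : T ⟶ M.tot) (h₁ h₂),
      β (L.smul f a) b h₁ = N.smul f (β a b h₂)) ∧
    (∀ {T : Scheme.{u}} (f : Γ(T, ⊤)) (a : T ⟶ L.tot) (b : T ⟶ M.tot) (h₁ h₂),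
      β a (M.smul f b) h₁ = N.smul f (β a b h₂)) ∧
    (∀ (U : X.Opens) (sL : Fin 1 → (U.toScheme ⟶ L.tot)) (sM : Fin 1 → (U.toScheme ⟶ M.tot)),
      L.toVecBundleData.IsFrame U sL → M.toVecBundleData.IsFrame U sM →
      ∀ (h : sL 0 ≫ L.π = sM 0 ≫ M.π),
        N.toVecBundleData.IsFrame (n := 1) U (fun _ => β (sL 0) (sM 0) h))

/-- `N` is an `m`-th tensor power of the line bundle `L`. -/
def IsTensorPow {X : Scheme.{u}} (L : LineBundle X) : ℕ → LineBundle X → Prop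
  | 0, N => IsTrivialBundle N
  | m + 1, N => ∃ M : LineBundle X, IsTensorPow L m M ∧ IsTensor M L N

/-- A line bundle is ample if the base is quasi-compact and quasi-separated and the
non-vanishing loci of global sections of positive tensor powers give an affine open cover. -/
def IsAmple {X : Scheme.{u}} (L : LineBundle X) : Prop :=
  CompactSpace X ∧ QuasiSeparatedSpace X ∧
  ∀ x : X, ∃ (m : ℕ), 0 < m ∧ ∃ (N : LineBundle X), IsTensorPow L m N ∧
    ∃ (s : X ⟶ N.tot), s ≫ N.π = 𝟙 X ∧
      ∃ U : X.Opens, IsAffineOpen U ∧ x ∈ U ∧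
        (U : Set X) = {y : X | s.base y ≠ N.zero.base y}
/-! ### Properties of schemes and group schemes over `k` -/

/-- An algebraic group over `k` is a group scheme of finite type over `k`. -/
def GroupSchemeOver.IsAlgebraic {k : Type u} [Field k] (G : GroupSchemeOver k) : Prop :=
  LocallyOfFiniteType G.str ∧ QuasiCompact G.str

/-- A scheme of finite type over `k`. -/
def SchemeOver.IsFiniteType {k : Type u} [Field k] (X : SchemeOver k) : Prop :=
  LocallyOfFiniteType X.str ∧ QuasiCompact X.str

/-- A variety over `k`: an integral separated scheme of finite type over `k`. -/
def SchemeOver.IsVariety {k : Type u} [Field k] (X : SchemeOver k) : Prop :=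
  IsIntegral X.carrier ∧ AlgebraicGeometry.IsSeparated X.str ∧ X.IsFiniteType

/-- A scheme is normal if all its local rings are integrally closed domains. -/
def IsNormalScheme (X : Scheme.{u}) : Prop :=
  ∀ x : X, IsDomain (X.presheaf.stalk x) ∧ IsIntegrallyClosed (X.presheaf.stalk x)

/-- The base change of a scheme over `k` to the algebraic closure of `k`. -/
def SchemeOver.geomFiber {k : Type u} [Field k] (X : SchemeOver k) : Scheme.{u} :=
  pullback X.str (Spec.map (CommRingCat.ofHom (algebraMap k (AlgebraicClosure k))))

/-- A scheme over `k` is geometrically integral if its base change to an algebraic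
closure of `k` is integral. -/
def SchemeOver.IsGeomIntegral {k : Type u} [Field k] (X : SchemeOver k) : Prop :=
  IsIntegral X.geomFiber

/-- A scheme over `k` is geometrically connected if its base change to an algebraic
closure of `k` is connected. -/
def SchemeOver.IsGeomConnected {k : Type u} [Field k] (X : SchemeOver k) : Prop :=
  ConnectedSpace X.geomFiber

/-- A scheme over `k` is geometrically irreducible if its base change to an algebraic
closure of `k` is irreducible. -/
def SchemeOver.IsGeomIrreducible {k : Type u} [Field k] (X : SchemeOver k) : Prop :=
  IrreducibleSpace X.geomFiber

/-- An open subscheme of a scheme over `k`, as a scheme over `k`. -/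
def SchemeOver.ofOpens {k : Type u} [Field k] (X : SchemeOver k) (U : X.carrier.Opens) :
    SchemeOver k :=
  ⟨U.toScheme, U.ι ≫ X.str⟩

/-- A scheme over `k` is quasi-projective if it is separated, of finite type, and carries
an ample line bundle. -/
def SchemeOver.IsQuasiProjective {k : Type u} [Field k] (X : SchemeOver k) : Prop :=
  AlgebraicGeometry.IsSeparated X.str ∧ X.IsFiniteType ∧
    ∃ L : LineBundle X.carrier, IsAmple L

/-- An open subset of `X` is stable under an action of `G` if the action preserves its
`T`-points, for all `T`. -/
def ActionOver.Stable {k : Type u} [Field k] {G : GroupSchemeOver k} {X : SchemeOver k}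
    (α : ActionOver G X) (U : X.carrier.Opens) : Prop :=
  ∀ {T : Scheme.{u}} (g : T ⟶ G.carrier) (x : T ⟶ X.carrier) (h),
    Set.range x.base ⊆ (U : Set X.carrier) →
      Set.range (α.act g x h).base ⊆ (U : Set X.carrier)

/-- A `G`-linearization of a vector bundle `E` on a `G`-scheme `X`: an action of `G` on the
total space of `E`, lifting the action on `X` and acting linearly on the fibers (equivalently,
an action of `G × 𝔾ₘ` on `E` for which the projection is equivariant and `𝔾ₘ` acts by
multiplication on the fibers). -/
structure LinearizationData {k : Type u} [Field k] {G : GroupSchemeOver k} {X : SchemeOver k}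
    (α : ActionOver G X) {n : ℕ} (E : VecBundle n X.carrier) where
  lact : ∀ {T : Scheme.{u}} (g : T ⟶ G.carrier) (e : T ⟶ E.tot),
    g ≫ G.str = (e ≫ E.π) ≫ X.str → (T ⟶ E.tot)
  lact_π : ∀ {T : Scheme.{u}} (g : T ⟶ G.carrier) (e : T ⟶ E.tot) (h h'),
    lact g e h ≫ E.π = α.act g (e ≫ E.π) h'
  lact_natural : ∀ {T' T : Scheme.{u}} (f : T' ⟶ T) (g : T ⟶ G.carrier) (e : T ⟶ E.tot) (h h'),
    f ≫ lact g e h = lact (f ≫ g) (f ≫ e) h'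
  one_lact : ∀ {T : Scheme.{u}} (e : T ⟶ E.tot) (h), lact (((e ≫ E.π) ≫ X.str) ≫ G.one) e h = e
  mul_lact : ∀ {T : Scheme.{u}} (g g' : T ⟶ G.carrier) (e : T ⟶ E.tot) (h₁ h₂ h₃ h₄),
    lact (G.mul g g' h₁) e h₂ = lact g (lact g' e h₃) h₄
  lact_add : ∀ {T : Scheme.{u}} (g : T ⟶ G.carrier) (a b : T ⟶ E.tot) (h₁ h₂ h₃ h₄ h₅),
    lact g (E.add a b h₁) h₂ = E.add (lact g a h₃) (lact g b h₄) h₅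
  lact_smul : ∀ {T : Scheme.{u}} (g : T ⟶ G.carrier) (f : Γ(T, ⊤)) (a : T ⟶ E.tot) (h₁ h₂),
    lact g (E.smul f a) h₁ = E.smul f (lact g a h₂)

/-- A vector bundle is `G`-linearized (linearizable) if it admits a linearization. -/
def ActionOver.IsLinearized {k : Type u} [Field k] {G : GroupSchemeOver k} {X : SchemeOver k}
    (α : ActionOver G X) {n : ℕ} (E : VecBundle n X.carrier) : Prop :=
  Nonempty (LinearizationData α E)

/-- Equivariance of a morphism relative to a homomorphism of group schemes. -/
def IsEquivariantRel {k : Type u} [Field k] {G H : GroupSchemeOver k} {X Y : SchemeOver k}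
    (φ : GroupHom G H) (α : ActionOver G X) (β : ActionOver H Y)
    (f : X.carrier ⟶ Y.carrier) : Prop :=
  f ≫ Y.str = X.str ∧
  ∀ {T : Scheme.{u}} (g : T ⟶ G.carrier) (x : T ⟶ X.carrier) (h h'),
    α.act g x h ≫ f = β.act (g ≫ φ.hom) (x ≫ f) h'

/-- Equivariance of a morphism of `G`-schemes. -/
def IsEquivariant {k : Type u} [Field k] {G : GroupSchemeOver k} {X Y : SchemeOver k}
    (α : ActionOver G X) (β : ActionOver G Y) (f : X.carrier ⟶ Y.carrier) : Prop :=
  f ≫ Y.str = X.str ∧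
  ∀ {T : Scheme.{u}} (g : T ⟶ G.carrier) (x : T ⟶ X.carrier) (h h'),
    α.act g x h ≫ f = β.act g (x ≫ f) h'

/-- A `T`-point of `G` acts trivially if it acts trivially on all points of `X` over `T`. -/
def ActionOver.ActsTrivially {k : Type u} [Field k] {G : GroupSchemeOver k}
    {X : SchemeOver k} (α : ActionOver G X) {T : Scheme.{u}} (g : T ⟶ G.carrier) : Prop :=
  ∀ {T' : Scheme.{u}} (t : T' ⟶ T) (x : T' ⟶ X.carrier) (h), α.act (t ≫ g) x h = x

/-- An action is almost faithful if its kernel is finite, i.e. all trivially acting points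
factor through a fixed closed subscheme of `G` which is finite over `k`. -/
def ActionOver.IsAlmostFaithful {k : Type u} [Field k] {G : GroupSchemeOver k}
    {X : SchemeOver k} (α : ActionOver G X) : Prop :=
  ∃ (K : Scheme.{u}) (ι : K ⟶ G.carrier), IsClosedImmersion ι ∧ IsFinite (ι ≫ G.str) ∧
    ∀ {T : Scheme.{u}} (g : T ⟶ G.carrier), α.ActsTrivially g → ∃ g' : T ⟶ K, g' ≫ ι = g

/-- An abelian variety over `k` is a smooth connected proper algebraic group over `k`. -/
def GroupSchemeOver.IsAbelianVariety {k : Type u} [Field k] (G : GroupSchemeOver k) : Prop :=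
  G.IsAlgebraic ∧ IsSmooth G.str ∧ ConnectedSpace G.carrier ∧ IsProper G.str
/-! ### Frobenius twists and quotients in characteristic `p` -/

/-- The morphism `Spec k ⟶ Spec k` induced by the `n`-th iterate of the Frobenius of `k`. -/
def frobSpec (k : Type u) [Field k] (p : ℕ) [Fact p.Prime] [CharP k p] (n : ℕ) :
    Spk k ⟶ Spk k :=
  Spec.map (CommRingCat.ofHom (iterateFrobenius k p n))

/-- `F : X ⟶ X` is the absolute `q`-power Frobenius endomorphism of `X`: the identity on the
underlying space, and the `q`-th power map on functions. -/
def IsAbsoluteFrobenius (X : Scheme.{u}) (q : ℕ) (F : X ⟶ X) : Prop :=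
  (∀ x : X, F.base x = x) ∧
  ∀ (U : X.Opens) (e : Opposite.op U = Opposite.op (F ⁻¹ᵁ U)) (a : Γ(X, U)),
    F.app U a = X.presheaf.map (eqToHom e) (a ^ q)

/-- Data exhibiting the `n`-th Frobenius twist `X^{(pⁿ)}` of a scheme `X` over `k` (as the base
change of `X` along the `n`-th Frobenius of `k`), together with the relative Frobenius morphism
`F^n_{X/k} : X ⟶ X^{(pⁿ)}` (the canonical factorization of the absolute Frobenius). -/
structure FrobeniusData (k : Type u) [Field k] (p : ℕ) [Fact p.Prime] [CharP k p] (n : ℕ)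
    (X : SchemeOver k) where
  tw : SchemeOver k
  pr : tw.carrier ⟶ X.carrier
  is_pullback : IsPullback pr tw.str X.str (frobSpec k p n)
  rel : X.carrier ⟶ tw.carrier
  rel_str : rel ≫ tw.str = X.str
  abs : X.carrier ⟶ X.carrier
  abs_frob : IsAbsoluteFrobenius X.carrier (p ^ n) abs
  rel_pr : rel ≫ pr = abs

/-- A group scheme over `k` is infinitesimal if it is finite and radicial over `Spec k`. -/
def GroupSchemeOver.IsInfinitesimal {k : Type u} [Field k] (I : GroupSchemeOver k) : Prop :=
  I.IsAlgebraic ∧ IsFinite I.str ∧ UniversallyInjective I.str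

/-- `n` is at least the height of the infinitesimal group scheme `I`, i.e. the `n`-th relative
Frobenius of `I` factors through the unit section of the twist (equivalently `I_n = I`). -/
def FrobKillsAt (k : Type u) [Field k] (p : ℕ) [Fact p.Prime] [CharP k p]
    (I : GroupSchemeOver k) (n : ℕ) : Prop :=
  ∀ FD : FrobeniusData k p n I.toSchemeOver,
    ∃ u : Spk k ⟶ FD.tw.carrier,
      u ≫ FD.pr = frobSpec k p n ≫ I.one ∧ u ≫ FD.tw.str = 𝟙 (Spk k) ∧
      FD.rel = I.str ≫ u

/-- `φ : X ⟶ Q` is a categorical quotient (in the category of schemes over `k`) of `X` by the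
action `α`. -/
def IsCatQuotient {k : Type u} [Field k] {I : GroupSchemeOver k} {X : SchemeOver k}
    (α : ActionOver I X) (Q : SchemeOver k) (φ : X.carrier ⟶ Q.carrier) : Prop :=
  φ ≫ Q.str = X.str ∧
  (∀ {T : Scheme.{u}} (g : T ⟶ I.carrier) (x : T ⟶ X.carrier) (h),
    α.act g x h ≫ φ = x ≫ φ) ∧
  ∀ (Z : SchemeOver k) (u : X.carrier ⟶ Z.carrier), u ≫ Z.str = X.str →
    (∀ {T : Scheme.{u}} (g : T ⟶ I.carrier) (x : T ⟶ X.carrier) (h),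
      α.act g x h ≫ u = x ≫ u) →
    ∃! v : Q.carrier ⟶ Z.carrier, φ ≫ v = u

/-- Data exhibiting the Frobenius twist `G^{(pⁿ)}` of a group scheme `G` over `k`, as a group
scheme, together with the relative Frobenius homomorphism. -/
structure TwistedGroupData (k : Type u) [Field k] (p : ℕ) [Fact p.Prime] [CharP k p] (n : ℕ)
    (G : GroupSchemeOver k) where
  tw : GroupSchemeOver k
  pr : tw.carrier ⟶ G.carrier
  is_pullback : IsPullback pr tw.str G.str (frobSpec k p n)
  pr_mul : ∀ {T : Scheme.{u}} (a b : T ⟶ tw.carrier) (h h'),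
    tw.mul a b h ≫ pr = G.mul (a ≫ pr) (b ≫ pr) h'
  rel : GroupHom G tw
  abs : G.carrier ⟶ G.carrier
  abs_frob : IsAbsoluteFrobenius G.carrier (p ^ n) abs
  rel_pr : rel.hom ≫ pr = abs

/-- Data exhibiting the Frobenius twist of an action: the induced action of `G^{(pⁿ)}` on
`X^{(pⁿ)}`, compatible with the projections and with the relative Frobenii. -/
structure TwistedActionData {k : Type u} [Field k] {p : ℕ} [Fact p.Prime] [CharP k p] {n : ℕ}
    {G : GroupSchemeOver k} {X : SchemeOver k} (α : ActionOver G X)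
    (GT : TwistedGroupData k p n G) (FD : FrobeniusData k p n X) where
  tact : ActionOver GT.tw FD.tw
  compat : ∀ {T : Scheme.{u}} (g : T ⟶ GT.tw.carrier) (x : T ⟶ FD.tw.carrier) (h h'),
    tact.act g x h ≫ FD.pr = α.act (g ≫ GT.pr) (x ≫ FD.pr) h'
  rel_equivariant : ∀ {T : Scheme.{u}} (g : T ⟶ G.carrier) (x : T ⟶ X.carrier) (h h'),
    α.act g x h ≫ FD.rel = tact.act (g ≫ GT.rel.hom) (x ≫ FD.rel) h'

namespace IQ

open TensorProduct in
theorem flat_eq {A₀ A M B : Type*} [CommRing A₀] [CommRing A] [CommRing M] [CommRing B]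
    [Algebra A₀ A] [Algebra A₀ M] [Algebra A₀ B] [Module.Flat A₀ B]
    (a b : A →ₐ[A₀] M) (hinj : Function.Injective (algebraMap A₀ A))
    (heq : ∀ x, a x = b x → x ∈ (algebraMap A₀ A).range) :
    Function.Injective (algebraMap B (B ⊗[A₀] A)) ∧
    ∀ z : B ⊗[A₀] A, Algebra.TensorProduct.map (AlgHom.id A₀ B) a z =
      Algebra.TensorProduct.map (AlgHom.id A₀ B) b z → z ∈ (algebraMap B (B ⊗[A₀] A)).range := by
  refine ⟨Algebra.TensorProduct.includeLeft_injective (S := A₀) hinj, fun z hz => ?_⟩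
  have hex : Function.Exact (Algebra.linearMap A₀ A) (a.toLinearMap - b.toLinearMap) := by
    intro x
    constructor
    · intro h
      exact heq x (sub_eq_zero.mp h)
    · rintro ⟨y, rfl⟩
      simp
  have hex' := Module.Flat.lTensor_exact B hex
  have h0 : (a.toLinearMap - b.toLinearMap).lTensor B z = 0 := by
    rw [LinearMap.lTensor_sub, LinearMap.sub_apply, sub_eq_zero]
    exact hz
  obtain ⟨w, hw⟩ := (hex' z).mp h0
  refine ⟨TensorProduct.rid A₀ B w, ?_⟩
  rw [← hw]
  clear hw h0 hz
  induction w with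
  | zero => simp
  | add x y hx hy => simp only [map_add, hx, hy]
  | tmul x y =>
    rw [TensorProduct.rid_tmul, LinearMap.lTensor_tmul, Algebra.linearMap_apply,
      Algebra.algebraMap_eq_smul_one (A := A) y, ← TensorProduct.smul_tmul]
    rfl

open TensorProduct in
theorem pow_tensor {A₀ A B : Type*} [CommRing A₀] [CommRing A] [CommRing B]
    [Algebra A₀ A] [Algebra A₀ B] (p : ℕ) [Fact p.Prime] (hp : (p : A₀) = 0)
    (h : ∀ x : A, ∃ n, x ^ p ^ n ∈ (algebraMap A₀ A).range) (z : B ⊗[A₀] A) :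
    ∃ n, z ^ p ^ n ∈ (algebraMap B (B ⊗[A₀] A)).range := by
  have hp' : (p : B ⊗[A₀] A) = 0 := by
    rw [← map_natCast (algebraMap A₀ (B ⊗[A₀] A)), hp, map_zero]
  induction z with
  | zero => exact ⟨0, by simp⟩
  | tmul x y =>
    obtain ⟨n, w, hw⟩ := h y
    refine ⟨n, x ^ p ^ n * algebraMap A₀ B w, ?_⟩
    rw [Algebra.TensorProduct.tmul_pow, ← hw]
    rw [Algebra.algebraMap_eq_smul_one (A := A) w, ← TensorProduct.smul_tmul, Algebra.smul_def,
      mul_comm]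
    rfl
  | add x y hx hy =>
    obtain ⟨n, hn⟩ := hx
    obtain ⟨m, hm⟩ := hy
    refine ⟨n + m, ?_⟩
    rcases subsingleton_or_nontrivial (B ⊗[A₀] A) with hs | hs
    · exact ⟨0, Subsingleton.elim _ _⟩
    have : CharP (B ⊗[A₀] A) p := by
      obtain ⟨q, hq⟩ := CharP.exists (B ⊗[A₀] A)
      have h1 := (CharP.cast_eq_zero_iff (B ⊗[A₀] A) q p).mp hp'
      rcases (Nat.dvd_prime Fact.out).mp h1 with h2 | h2
      · exact absurd h2 (CharP.char_ne_one (B ⊗[A₀] A) q)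
      · exact h2 ▸ hq
    rw [add_pow_char_pow]
    refine add_mem ?_ ?_
    · rw [pow_add, pow_mul]; exact pow_mem hn _
    · rw [add_comm, pow_add, pow_mul]; exact pow_mem hm _

end IQ

namespace IQ

theorem hom_ext_loc {X Y : Scheme.{u}} (f g : X ⟶ Y)
    (H : ∀ x : X, ∃ (V : Scheme.{u}) (l : V ⟶ X), IsOpenImmersion l ∧ x ∈ Set.range l ∧
      l ≫ f = l ≫ g) : f = g := by
  refine Scheme.hom_ext_of_forall f g fun x => ?_
  obtain ⟨V, l, hl, hx, e⟩ := H x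
  refine ⟨l.opensRange, hx, ?_⟩
  rw [← cancel_epi l.isoOpensRange.hom]
  simpa using e

/-- An open `V` of `Q` is good when `φ` restricted to `V` is a coequalizer of `Rel`
for affine targets. -/
def Good {X Q : Scheme.{u}} (φ : X ⟶ Q)
    (Rel : ∀ (T : Scheme.{u}), (T ⟶ X) → (T ⟶ X) → Prop) (V : Q.Opens) : Prop :=
  ∀ (Z : Scheme.{u}) [IsAffine Z] (s : (φ ⁻¹ᵁ V).toScheme ⟶ Z),
    (∀ (T : Scheme.{u}) (x x' : T ⟶ (φ ⁻¹ᵁ V).toScheme),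
      Rel T (x ≫ (φ ⁻¹ᵁ V).ι) (x' ≫ (φ ⁻¹ᵁ V).ι) → x ≫ s = x' ≫ s) →
    ∃! t : V.toScheme ⟶ Z, (φ ∣_ V) ≫ t = s

theorem good_unique {X Q : Scheme.{u}} (φ : X ⟶ Q)
    (Rel : ∀ (T : Scheme.{u}), (T ⟶ X) → (T ⟶ X) → Prop)
    (hRel : ∀ (T : Scheme.{u}) (x x' : T ⟶ X), Rel T x x' → x ≫ φ = x' ≫ φ)
    [Surjective φ]
    (hgood : ∀ (q : Q) (N : Q.Opens), q ∈ N → ∃ V : Q.Opens, q ∈ V ∧ V ≤ N ∧ Good φ Rel V)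
    {O X' Z : Scheme.{u}} (j : O ⟶ Q) [IsOpenImmersion j] (g : X' ⟶ X) (φ' : X' ⟶ O)
    (hpb : IsPullback g φ' φ j) (t₁ t₂ : O ⟶ Z) (h : φ' ≫ t₁ = φ' ≫ t₂) : t₁ = t₂ := by
  have hs : Surjective φ' := MorphismProperty.of_isPullback hpb ‹_›
  have hpt : ∀ o : O, t₁ o = t₂ o := by
    intro o
    obtain ⟨x, rfl⟩ := hs.surj o
    rw [← Scheme.Hom.comp_apply, ← Scheme.Hom.comp_apply, h]
  refine hom_ext_loc _ _ fun o => ?_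
  obtain ⟨W, hW, hoW, -⟩ := exists_isAffineOpen_mem_and_subset (x := t₁ o) (U := ⊤) trivial
  obtain ⟨V, hqV, hVN, hV⟩ := hgood (j o) (j ''ᵁ (t₁ ⁻¹ᵁ W)) ⟨o, hoW, rfl⟩
  have hr : Set.range V.ι ⊆ Set.range j := by
    rw [Scheme.Opens.range_ι]
    intro y hy
    obtain ⟨z, -, hz⟩ := hVN hy
    exact ⟨z, hz⟩
  let l := IsOpenImmersion.lift j V.ι hr
  have hl : l ≫ j = V.ι := IsOpenImmersion.lift_fac _ _ _
  have hlV : ∀ v : V, t₁ (l v) ∈ W := by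
    intro v
    obtain ⟨z, hz, hz'⟩ := hVN v.2
    have : j (l v) = j z := by
      exact (congrArg (fun f : V.toScheme ⟶ Q => f v) hl).trans hz'.symm
    rw [j.isOpenEmbedding.injective this]
    exact hz
  refine ⟨_, l, inferInstance, ⟨⟨j o, hqV⟩, ?_⟩, ?_⟩
  · apply j.isOpenEmbedding.injective
    exact congrArg (fun f : V.toScheme ⟶ Q => f ⟨j o, hqV⟩) hl
  have h1 : Set.range (l ≫ t₁) ⊆ Set.range W.ι := by
    rw [Scheme.Opens.range_ι]
    rintro _ ⟨v, rfl⟩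
    rw [Scheme.Hom.comp_apply]
    exact hlV v
  have h2 : Set.range (l ≫ t₂) ⊆ Set.range W.ι := by
    rw [Scheme.Opens.range_ι]
    rintro _ ⟨v, rfl⟩
    rw [Scheme.Hom.comp_apply, ← hpt]
    exact hlV v
  have hWa : IsAffine W.toScheme := hW
  let m := hpb.lift (φ ⁻¹ᵁ V).ι ((φ ∣_ V) ≫ l) (by
    rw [Category.assoc, hl, morphismRestrict_ι])
  have hm : m ≫ φ' = (φ ∣_ V) ≫ l := hpb.lift_snd _ _ _
  obtain ⟨t, -, ht⟩ := hV W.toScheme ((φ ∣_ V) ≫ IsOpenImmersion.lift W.ι (l ≫ t₁) h1) (by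
    intro T x x' hx
    have := hRel _ _ _ hx
    simp only [Category.assoc, ← morphismRestrict_ι] at this
    simp only [← Category.assoc] at this
    rw [cancel_mono] at this
    rw [reassoc_of% this])
  have e1 := ht _ rfl
  have e2 := ht (IsOpenImmersion.lift W.ι (l ≫ t₂) h2) (by
    beta_reduce
    rw [← cancel_mono W.ι]
    simp only [Category.assoc, IsOpenImmersion.lift_fac]
    rw [← reassoc_of% hm, ← reassoc_of% hm, h])
  rw [← IsOpenImmersion.lift_fac W.ι (l ≫ t₁) h1, ← IsOpenImmersion.lift_fac W.ι (l ≫ t₂) h2,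
    e1, e2]

theorem good_glue {X Q : Scheme.{u}} (φ : X ⟶ Q)
    (Rel : ∀ (T : Scheme.{u}), (T ⟶ X) → (T ⟶ X) → Prop)
    (hRel : ∀ (T : Scheme.{u}) (x x' : T ⟶ X), Rel T x x' → x ≫ φ = x' ≫ φ)
    (hφ : IsHomeomorph φ)
    (hgood : ∀ (q : Q) (N : Q.Opens), q ∈ N → ∃ V : Q.Opens, q ∈ V ∧ V ≤ N ∧ Good φ Rel V)
    {Z : Scheme.{u}} (s : X ⟶ Z)
    (hs : ∀ (T : Scheme.{u}) (x x' : T ⟶ X), Rel T x x' → x ≫ s = x' ≫ s) :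
    ∃! t : Q ⟶ Z, φ ≫ t = s := by
  have : Surjective φ := ⟨hφ.surjective⟩
  have hex : ∀ q : Q, ∃ (V : Q.Opens) (t : V.toScheme ⟶ Z), q ∈ V ∧
      (φ ∣_ V) ≫ t = (φ ⁻¹ᵁ V).ι ≫ s := by
    intro q
    obtain ⟨x, rfl⟩ := hφ.surjective q
    obtain ⟨W, hW, hxW, -⟩ := exists_isAffineOpen_mem_and_subset (x := s x) (U := ⊤) trivial
    let N : Q.Opens := ⟨φ '' (s ⁻¹ᵁ W : X.Opens), hφ.isOpenMap _ (s ⁻¹ᵁ W).2⟩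
    obtain ⟨V, hqV, hVN, hV⟩ := hgood (φ x) N ⟨x, hxW, rfl⟩
    have hWa : IsAffine W.toScheme := hW
    have h1 : Set.range ((φ ⁻¹ᵁ V).ι ≫ s) ⊆ Set.range W.ι := by
      rw [Scheme.Opens.range_ι]
      rintro _ ⟨v, rfl⟩
      rw [Scheme.Hom.comp_apply]
      obtain ⟨y, hy, hy'⟩ := hVN v.2
      have := hφ.injective hy'
      subst this
      exact hy
    obtain ⟨t, ht, -⟩ := hV W.toScheme (IsOpenImmersion.lift W.ι _ h1) (by
      intro T x x' hx
      rw [← cancel_mono W.ι]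
      simp only [Category.assoc, IsOpenImmersion.lift_fac]
      simpa using hs _ _ _ hx)
    refine ⟨V, t ≫ W.ι, hqV, ?_⟩
    rw [reassoc_of% ht, IsOpenImmersion.lift_fac]
  choose V t hqV ht using hex
  let 𝒰 : Q.OpenCover := {
    I₀ := Q, X i := (V i), f i := (V i).ι,
    mem₀ := by
      rw [Scheme.presieve₀_mem_precoverage_iff]
      refine ⟨fun x => ⟨x, by simpa using hqV x⟩, inferInstance⟩ }
  refine ⟨𝒰.glueMorphisms t ?_, ?_, ?_⟩
  · intro i j
    refine good_unique φ Rel hRel hgood (pullback.fst (V i).ι (V j).ι ≫ (V i).ι)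
      (pullback.fst φ _) (pullback.snd φ _) (IsPullback.of_hasPullback _ _) _ _ ?_
    let mi : pullback φ (pullback.fst (V i).ι (V j).ι ≫ (V i).ι) ⟶ φ ⁻¹ᵁ (V i) :=
      (isPullback_morphismRestrict φ (V i)).flip.lift (pullback.fst _ _)
        (pullback.snd _ _ ≫ pullback.fst _ _) (by simp [pullback.condition])
    let mj : pullback φ (pullback.fst (V i).ι (V j).ι ≫ (V i).ι) ⟶ φ ⁻¹ᵁ (V j) :=
      (isPullback_morphismRestrict φ (V j)).flip.lift (pullback.fst _ _)
        (pullback.snd _ _ ≫ pullback.snd _ _) (by simp [pullback.condition])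
    have hmi : mi ≫ (φ ∣_ V i) = pullback.snd _ _ ≫ pullback.fst _ _ :=
      (isPullback_morphismRestrict φ (V i)).flip.lift_snd _ _ _
    have hmj : mj ≫ (φ ∣_ V j) = pullback.snd _ _ ≫ pullback.snd _ _ :=
      (isPullback_morphismRestrict φ (V j)).flip.lift_snd _ _ _
    have hmi' : mi ≫ (φ ⁻¹ᵁ V i).ι = pullback.fst _ _ :=
      (isPullback_morphismRestrict φ (V i)).flip.lift_fst _ _ _
    have hmj' : mj ≫ (φ ⁻¹ᵁ V j).ι = pullback.fst _ _ :=
      (isPullback_morphismRestrict φ (V j)).flip.lift_fst _ _ _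
    change pullback.snd φ _ ≫ pullback.fst (V i).ι (V j).ι ≫ t i =
      pullback.snd φ _ ≫ pullback.snd (V i).ι (V j).ι ≫ t j
    rw [← reassoc_of% hmi, ← reassoc_of% hmj, ht, ht, reassoc_of% hmi', reassoc_of% hmj']
  · refine Scheme.hom_ext_of_forall _ _ fun x => ⟨φ ⁻¹ᵁ (V (φ x)), hqV (φ x), ?_⟩
    rw [← ht, ← morphismRestrict_ι_assoc]
    congr 1
    exact 𝒰.ι_glueMorphisms _ _ _
  · intro t' ht'
    refine good_unique φ Rel hRel hgood (𝟙 Q) (𝟙 X) φ (IsPullback.of_horiz_isIso ⟨by simp⟩) _ _ ?_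
    rw [ht']
    symm
    refine Scheme.hom_ext_of_forall _ _ fun x => ⟨φ ⁻¹ᵁ (V (φ x)), hqV (φ x), ?_⟩
    rw [← ht, ← morphismRestrict_ι_assoc]
    congr 1
    exact 𝒰.ι_glueMorphisms _ _ _

end IQ

namespace IQ

theorem ring_lift {B C D : Type*} [CommRing B] [CommRing C] [CommRing D]
    (f : B →+* D) (hf : Function.Injective f) (σ : C →+* D) (h : ∀ c, σ c ∈ f.range) :
    ∃ τ : C →+* B, f.comp τ = σ := by
  have hb : Function.Bijective f.rangeRestrict :=
    ⟨fun x y hxy => hf (congrArg Subtype.val hxy), f.rangeRestrict_surjective⟩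
  refine ⟨((RingEquiv.ofBijective f.rangeRestrict hb).symm : f.range →+* B).comp
    (σ.codRestrict f.range h), ?_⟩
  ext c
  have := (RingEquiv.ofBijective f.rangeRestrict hb).apply_symm_apply (σ.codRestrict f.range h c)
  exact congrArg Subtype.val this

open TensorProduct in
theorem affine_main (p : ℕ) [Fact p.Prime] {A₀ A M B : Type u} [CommRing A₀] [CommRing A]
    [CommRing M] [CommRing B]
    [Algebra A₀ A] [Algebra A₀ M] [Algebra A₀ B] [Module.Flat A₀ B]
    (a b : A →ₐ[A₀] M) (hinj : Function.Injective (algebraMap A₀ A))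
    (heq : ∀ x, a x = b x → x ∈ (algebraMap A₀ A).range)
    (hp : (p : A₀) = 0) (hpow : ∀ x : A, ∃ n, x ^ p ^ n ∈ (algebraMap A₀ A).range)
    {XB : Scheme.{u}} (gA : XB ⟶ Spec (.of A)) (φB : XB ⟶ Spec (.of B))
    (hpb : IsPullback gA φB (Spec.map (CommRingCat.ofHom (algebraMap A₀ A)))
      (Spec.map (CommRingCat.ofHom (algebraMap A₀ B)))) :
    IsHomeomorph φB ∧ ∀ (Z : Scheme.{u}) [IsAffine Z] (s : XB ⟶ Z),
      (∀ (T : Scheme.{u}) (x x' : T ⟶ XB), x ≫ φB = x' ≫ φB →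
        ∀ r : T ⟶ Spec (.of M), r ≫ Spec.map (CommRingCat.ofHom a.toRingHom) = x ≫ gA →
          r ≫ Spec.map (CommRingCat.ofHom b.toRingHom) = x' ≫ gA → x ≫ s = x' ≫ s) →
        ∃! t : Spec (.of B) ⟶ Z, φB ≫ t = s := by
  have hpo := isPullback_SpecMap_of_isPushout _ _ _ _ (CommRingCat.isPushout_tensorProduct A₀ B A)
  let e := hpb.flip.isoIsPullback _ _ hpo
  have he1 : e.hom ≫ Spec.map (CommRingCat.ofHom Algebra.TensorProduct.includeLeftRingHom) = φB :=
    hpb.flip.isoIsPullback_hom_fst _ _ hpo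
  have he2 : e.hom ≫ Spec.map (CommRingCat.ofHom (Algebra.TensorProduct.includeRight (R := A₀) (A := B) (B := A)).toRingHom) = gA :=
    hpb.flip.isoIsPullback_hom_snd _ _ hpo
  obtain ⟨hi, hr⟩ := flat_eq (B := B) a b hinj heq
  have hhom : IsHomeomorph φB := by
    have h1 : IsHomeomorph (Spec.map (CommRingCat.ofHom (Algebra.TensorProduct.includeLeftRingHom (R := A₀) (A := B) (B := A)))) := by
      refine PrimeSpectrum.isHomeomorph_comap _ (fun x => ?_) ?_
      · obtain ⟨n, hn⟩ := pow_tensor p hp hpow x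
        exact ⟨p ^ n, pow_pos (Nat.Prime.pos Fact.out) n, hn⟩
      · exact ((RingHom.injective_iff_ker_eq_bot _).mp hi).le.trans bot_le
    rw [← he1]
    have h2 : IsHomeomorph e.hom := e.hom.homeomorph.isHomeomorph
    rw [Scheme.Hom.comp_base]
    exact h1.comp h2
  refine ⟨hhom, fun Z _ s hs => ?_⟩
  let C := Γ(Z, ⊤)
  let σ : C ⟶ CommRingCat.of (B ⊗[A₀] A) := Spec.preimage (e.inv ≫ s ≫ Z.isoSpec.hom)
  have hσ : Spec.map σ = e.inv ≫ s ≫ Z.isoSpec.hom := Spec.map_preimage _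
  have key : ∀ c, σ.hom c ∈ (algebraMap B (B ⊗[A₀] A)).range := by
    intro c
    apply hr
    have := hs (Spec (.of (B ⊗[A₀] M)))
      (Spec.map (CommRingCat.ofHom (Algebra.TensorProduct.map (AlgHom.id A₀ B) a).toRingHom) ≫ e.inv)
      (Spec.map (CommRingCat.ofHom (Algebra.TensorProduct.map (AlgHom.id A₀ B) b).toRingHom) ≫ e.inv)
      (by
        rw [← he1]
        simp only [Category.assoc, Iso.inv_hom_id_assoc, ← Spec.map_comp]
        congr 1
        ext x
        simp)
      (Spec.map (CommRingCat.ofHom (Algebra.TensorProduct.includeRight (R := A₀) (A := B) (B := M)).toRingHom))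
      (by
        rw [← he2]
        simp only [Category.assoc, Iso.inv_hom_id_assoc, ← Spec.map_comp]
        congr 1)
      (by
        rw [← he2]
        simp only [Category.assoc, Iso.inv_hom_id_assoc, ← Spec.map_comp]
        congr 1)
    have h2 := congrArg (· ≫ Z.isoSpec.hom) this
    simp only [Category.assoc] at h2
    rw [← hσ, ← Spec.map_comp, ← Spec.map_comp] at h2
    have h3 := Spec.map_injective h2
    exact congrArg (fun f => f.hom c) h3
  obtain ⟨τ, hτ⟩ := ring_lift _ hi σ.hom key
  have hτ' : CommRingCat.ofHom τ ≫ CommRingCat.ofHom Algebra.TensorProduct.includeLeftRingHom = σ := by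
    ext c
    exact congrArg (fun f => f c) hτ
  refine ⟨Spec.map (CommRingCat.ofHom τ) ≫ Z.isoSpec.inv, ?_, ?_⟩
  · beta_reduce
    rw [← he1, Category.assoc, ← Spec.map_comp_assoc, hτ', hσ]
    simp
  · intro t ht
    rw [← cancel_mono Z.isoSpec.hom]
    obtain ⟨ρ, hρ⟩ := Spec.map_surjective (t ≫ Z.isoSpec.hom)
    rw [← hρ]
    simp only [Category.assoc, Iso.inv_hom_id, Category.comp_id]
    congr 1
    have : ρ ≫ CommRingCat.ofHom Algebra.TensorProduct.includeLeftRingHom = σ := by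
      apply Spec.map_injective
      rw [Spec.map_comp, hσ, hρ, ← ht, ← he1]
      simp
    ext c
    apply hi
    exact congrArg (fun f => f.hom c) (this.trans hτ'.symm)

/-- An affine chart of `φ : X ⟶ Q` adapted to the pair `a, b : R ⟶ X`. -/
structure Chart (p : ℕ) {R X Q : Scheme.{u}} (a b : R ⟶ X) (φ : X ⟶ Q) where
  A₀ : CommRingCat.{u}
  A : CommRingCat.{u}
  M : CommRingCat.{u}
  i : A₀ ⟶ A
  a' : A ⟶ M
  b' : A ⟶ M
  inj : Function.Injective i.hom
  comm : i ≫ a' = i ≫ b'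
  equ : ∀ x : A, a'.hom x = b'.hom x → x ∈ i.hom.range
  char : (p : A₀) = 0
  pow : ∀ x : A, ∃ n : ℕ, x ^ p ^ n ∈ i.hom.range
  ι : Spec A₀ ⟶ Q
  oi : IsOpenImmersion ι
  jA : Spec A ⟶ X
  pb : IsPullback jA (Spec.map i) φ ι
  jM : Spec M ⟶ R
  ha : Spec.map a' ≫ jA = jM ≫ a
  hb : Spec.map b' ≫ jA = jM ≫ b

theorem flat_bc (p : ℕ) [Fact p.Prime] {R X Q : Scheme.{u}} (a b : R ⟶ X) (φ : X ⟶ Q)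
    (hcov : ∀ q : Q, ∃ c : Chart p a b φ, q ∈ Set.range c.ι)
    {Q' X' : Scheme.{u}} (g : Q' ⟶ Q) [Flat g] (g' : X' ⟶ X) (φ' : X' ⟶ Q')
    (hpb : IsPullback g' φ' φ g) {Z : Scheme.{u}} (s : X' ⟶ Z)
    (hs : ∀ (T : Scheme.{u}) (x x' : T ⟶ X'), x ≫ φ' = x' ≫ φ' →
      ∀ r : T ⟶ R, r ≫ a = x ≫ g' → r ≫ b = x' ≫ g' → x ≫ s = x' ≫ s) :
    ∃! t : Q' ⟶ Z, φ' ≫ t = s := by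
  let Rel : ∀ (T : Scheme.{u}), (T ⟶ X') → (T ⟶ X') → Prop := fun T x x' =>
    x ≫ φ' = x' ≫ φ' ∧ ∃ r : T ⟶ R, r ≫ a = x ≫ g' ∧ r ≫ b = x' ≫ g'
  have main : ∀ (q : Q') (N : Q'.Opens), q ∈ N →
      ∃ V : Q'.Opens, q ∈ V ∧ V ≤ N ∧ IsHomeomorph (φ' ∣_ V) ∧ Good φ' Rel V := by
    intro q N hq
    obtain ⟨c, hc⟩ := hcov (g q)
    have := c.oi
    obtain ⟨V, hV, hqV, hVN⟩ := exists_isAffineOpen_mem_and_subset (x := q)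
      (U := N ⊓ g ⁻¹ᵁ c.ι.opensRange) ⟨hq, hc⟩
    refine ⟨V, hqV, hVN.trans inf_le_left, ?_⟩
    have hr : Set.range (V.ι ≫ g) ⊆ Set.range c.ι := by
      rintro _ ⟨v, rfl⟩
      rw [Scheme.Hom.comp_apply]
      exact (hVN v.2).2
    let l := IsOpenImmersion.lift c.ι (V.ι ≫ g) hr
    have hl : l ≫ c.ι = V.ι ≫ g := IsOpenImmersion.lift_fac _ _ _
    have hlflat : Flat l :=
      MorphismProperty.of_isPullback (IsOpenImmersion.isPullback_lift_id _ _ hr).flip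
        (inferInstance : Flat (V.ι ≫ g))
    have hpbV : IsPullback ((φ' ⁻¹ᵁ V).ι ≫ g') (φ' ∣_ V) φ (l ≫ c.ι) := by
      rw [hl]
      exact (isPullback_morphismRestrict φ' V).flip.paste_horiz hpb
    let gA := c.pb.lift ((φ' ⁻¹ᵁ V).ι ≫ g') ((φ' ∣_ V) ≫ l) (by rw [hpbV.w, Category.assoc])
    have hgA : gA ≫ c.jA = (φ' ⁻¹ᵁ V).ι ≫ g' := c.pb.lift_fst _ _ _
    have hgA' : gA ≫ Spec.map c.i = (φ' ∣_ V) ≫ l := c.pb.lift_snd _ _ _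
    have hpbA : IsPullback gA (φ' ∣_ V) (Spec.map c.i) l := by
      refine IsPullback.of_right ?_ hgA' c.pb
      rw [hgA]
      exact hpbV
    let B : CommRingCat.{u} := Γ(Q', V)
    let eV : V.toScheme ≅ Spec B := hV.isoSpec
    let f : c.A₀ ⟶ B := Spec.preimage (eV.inv ≫ l)
    have hf : Spec.map f = eV.inv ≫ l := Spec.map_preimage _
    have hpbB : IsPullback gA ((φ' ∣_ V) ≫ eV.hom) (Spec.map c.i) (Spec.map f) := by
      refine hpbA.of_iso (Iso.refl _) (Iso.refl _) eV (Iso.refl _) ?_ ?_ ?_ ?_ <;> simp [hf]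
    have hfflat : f.hom.Flat := by
      rw [← Flat.SpecMap_iff, hf]
      infer_instance
    let _ : Algebra c.A₀ B := f.hom.toAlgebra
    let _ : Algebra c.A₀ c.A := c.i.hom.toAlgebra
    let _ : Algebra c.A₀ c.M := (c.i ≫ c.a').hom.toAlgebra
    have : Module.Flat c.A₀ B := hfflat
    let a₁ : c.A →ₐ[c.A₀] c.M := { c.a'.hom with commutes' := fun r => rfl }
    let b₁ : c.A →ₐ[c.A₀] c.M := { c.b'.hom with
      commutes' := fun r => (congrArg (fun f => f.hom r) c.comm).symm }
    obtain ⟨h1, h2⟩ := affine_main p a₁ b₁ c.inj c.equ c.char c.pow gA _ hpbB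
    refine ⟨?_, ?_⟩
    · have h3 : IsHomeomorph eV.inv := eV.inv.homeomorph.isHomeomorph
      have h4 := h3.comp h1
      have h5 : φ' ∣_ V = ((φ' ∣_ V) ≫ eV.hom) ≫ eV.inv := by simp
      rw [h5, Scheme.Hom.comp_base]
      exact h4
    · intro Z _ s hs
      obtain ⟨t, ht, htu⟩ := h2 Z s (by
        intro T x x' hx r hr1 hr2
        have hx' : x ≫ (φ' ∣_ V) = x' ≫ (φ' ∣_ V) := by
          rw [← cancel_mono eV.hom]
          simpa using hx
        apply hs
        refine ⟨?_, r ≫ c.jM, ?_, ?_⟩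
        · simp only [Category.assoc, ← morphismRestrict_ι]
          rw [reassoc_of% hx']
        · rw [Category.assoc, ← c.ha, Category.assoc, ← hgA, ← Category.assoc, ← Category.assoc]
          exact congrArg (· ≫ c.jA) hr1
        · rw [Category.assoc, ← c.hb, Category.assoc, ← hgA, ← Category.assoc, ← Category.assoc]
          exact congrArg (· ≫ c.jA) hr2)
      refine ⟨eV.hom ≫ t, ?_, ?_⟩
      · simpa using ht
      · intro t' ht'
        rw [← htu (eV.inv ≫ t') (by simpa using ht')]
        simp
  refine good_glue φ' Rel (fun T x x' h => h.1) ?_ (fun q N hq => ?_) s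
    (fun T x x' h => ?_)
  · choose V h1 h2 h3 h4 using fun q : Q' => main q ⊤ trivial
    have hcV : TopologicalSpace.IsOpenCover V := by
      rw [TopologicalSpace.IsOpenCover, eq_top_iff]
      intro q _
      exact TopologicalSpace.Opens.mem_iSup.mpr ⟨q, h1 q⟩
    rw [hcV.isHomeomorph_iff_restrictPreimage φ'.continuous]
    intro q
    rw [← morphismRestrict_base]
    exact h3 q
  · obtain ⟨V, h1, h2, h3, h4⟩ := main q N hq
    exact ⟨V, h1, h2, h4⟩
  · obtain ⟨h1, r, h2, h3⟩ := h
    exact hs T x x' h1 r h2 h3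

end IQ

namespace IQ

open Scheme in
/-- The diagram of affine opens of `X`. -/
abbrev diag (X : Scheme.{u}) : X.AffineZariskiSite ⥤ Scheme.{u} :=
  AffineZariskiSite.toOpensFunctor X ⋙ X.presheaf.rightOp ⋙ Scheme.Spec

open Scheme in
theorem diag_map_fromSpec {X : Scheme.{u}} {U V : X.AffineZariskiSite} (f : U ⟶ V) :
    (diag X).map f ≫ V.2.fromSpec = U.2.fromSpec :=
  (AffineZariskiSite.cocone X).w f

open Scheme in
theorem glue_quot {X : Scheme.{u}} (F : X.AffineZariskiSite ⥤ Scheme.{u}) (π : diag X ⟶ F)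
    (hF : ∀ {U V : X.AffineZariskiSite} (f : U ⟶ V), IsOpenImmersion (F.map f))
    (hπ : ∀ U, Function.Bijective (π.app U)) :
    ∃ (Q : Scheme.{u}) (φ : X ⟶ Q) (ι : ∀ U, F.obj U ⟶ Q),
      (∀ U, IsOpenImmersion (ι U)) ∧
      (∀ U : X.AffineZariskiSite, IsPullback U.2.fromSpec (π.app U) φ (ι U)) ∧
      ∀ q, ∃ U, q ∈ Set.range (ι U) := by
  have hinj : ∀ U : X.AffineZariskiSite, Function.Injective U.2.fromSpec := fun U =>
    U.2.fromSpec.isOpenEmbedding.injective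
  have hmap : ∀ {U V : X.AffineZariskiSite} (f : U ⟶ V) (x : (diag X).obj U),
      V.2.fromSpec ((diag X).map f x) = U.2.fromSpec x := by
    intro U V f x
    rw [← diag_map_fromSpec f]
    rfl
  have hnat : ∀ {U V : X.AffineZariskiSite} (f : U ⟶ V) (x : (diag X).obj U),
      F.map f (π.app U x) = π.app V ((diag X).map f x) := by
    intro U V f x
    exact (congrArg (fun g : (diag X).obj U ⟶ F.obj V => g x) (π.naturality f)).symm
  have hdir : (F ⋙ Scheme.forget).IsLocallyDirected := by
    constructor
    intro i j k fi fj xi xj h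
    obtain ⟨yi, rfl⟩ := (hπ i).2 xi
    obtain ⟨yj, rfl⟩ := (hπ j).2 xj
    have h1 : F.map fi (π.app i yi) = F.map fj (π.app j yj) := h
    rw [hnat, hnat] at h1
    have h2 := congrArg k.2.fromSpec ((hπ k).1 h1)
    rw [hmap, hmap] at h2
    have hxi : i.2.fromSpec yi ∈ i.1 := by
      have : i.2.fromSpec yi ∈ Set.range i.2.fromSpec := ⟨yi, rfl⟩
      rwa [i.2.range_fromSpec] at this
    have hxj : i.2.fromSpec yi ∈ j.1 := by
      have : i.2.fromSpec yi ∈ Set.range j.2.fromSpec := ⟨yj, h2.symm⟩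
      rwa [j.2.range_fromSpec] at this
    obtain ⟨f, g, e, hxf⟩ := exists_basicOpen_le_affine_inter i.2 j.2 _ ⟨hxi, hxj⟩
    have hl : i.2.fromSpec yi ∈ Set.range (i.basicOpen f).2.fromSpec := by
      rw [IsAffineOpen.range_fromSpec]
      exact hxf
    obtain ⟨z, hz⟩ := hl
    let fli : i.basicOpen f ⟶ i := homOfLE (i.basicOpen_le f)
    let flj : i.basicOpen f ⟶ j := homOfLE ⟨g, e.symm⟩
    refine ⟨i.basicOpen f, fli, flj, π.app _ z, ?_, ?_⟩
    · refine (hnat fli z).trans (congrArg _ (hinj i ?_))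
      exact (hmap fli z).trans hz
    · refine (hnat flj z).trans (congrArg _ (hinj j ?_))
      exact (hmap flj z).trans (hz.trans h2)
  let c : Cocone (diag X) := (Cocone.precompose π).obj (colimit.cocone F)
  let φ : X ⟶ colimit F := (AffineZariskiSite.isColimitCocone X).desc c
  have hφ : ∀ U : X.AffineZariskiSite, U.2.fromSpec ≫ φ = π.app U ≫ colimit.ι F U := fun U =>
    (AffineZariskiSite.isColimitCocone X).fac c U
  have hφ' : ∀ (U : X.AffineZariskiSite) (y : (diag X).obj U),
      φ (U.2.fromSpec y) = colimit.ι F U (π.app U y) := fun U y =>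
    congrArg (fun g : (diag X).obj U ⟶ colimit F => g y) (hφ U)
  refine ⟨colimit F, φ, fun U => colimit.ι F U, fun U => inferInstance, fun U => ?_, fun q => ?_⟩
  · refine (IsOpenImmersion.isPullback _ _ _ _ (hφ U) ?_).flip
    ext x
    constructor
    · rintro ⟨z, hz⟩
      obtain ⟨V, hV, hxV, -⟩ := exists_isAffineOpen_mem_and_subset (x := x) (U := ⊤) trivial
      let V' : X.AffineZariskiSite := ⟨V, hV⟩
      have : x ∈ Set.range V'.2.fromSpec := by
        rw [IsAffineOpen.range_fromSpec]
        exact hxV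
      obtain ⟨y, rfl⟩ := this
      have h1 : colimit.ι F V' (π.app V' y) = colimit.ι F U z := (hφ' V' y).symm.trans hz.symm
      obtain ⟨W, fi, fj, w, hw1, hw2⟩ := Scheme.IsLocallyDirected.ι_eq_ι_iff F |>.mp h1
      obtain ⟨w, rfl⟩ := (hπ W).2 w
      rw [hnat] at hw1
      have h2 := (hπ V').1 hw1
      refine ⟨(diag X).map fj w, ?_⟩
      exact (hmap fj w).trans ((hmap fi w).symm.trans (congrArg _ h2))
    · rintro ⟨y, rfl⟩
      exact ⟨π.app U y, (hφ' U y).symm⟩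
  · obtain ⟨U, x, hx⟩ := Scheme.IsLocallyDirected.ι_jointly_surjective F q
    exact ⟨U, x, hx⟩

end IQ

namespace IQ

theorem eqLocus_loc {A A' M M' : Type u} [CommRing A] [CommRing A'] [CommRing M] [CommRing M']
    [Algebra A A'] [Algebra M M'] (a b : A →+* M) (a' b' : A' →+* M')
    (ha : ∀ x, a' (algebraMap A A' x) = algebraMap M M' (a x))
    (hb : ∀ x, b' (algebraMap A A' x) = algebraMap M M' (b x))
    (f : A) (hf : a f = b f) [IsLocalization.Away f A'] [IsLocalization.Away (b f) M']
    [Algebra (a.eqLocus b) (a'.eqLocus b')]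
    (hr : ∀ x : a.eqLocus b, ((algebraMap (a.eqLocus b) (a'.eqLocus b') x : a'.eqLocus b') : A') =
      algebraMap A A' x) :
    IsLocalization.Away (⟨f, hf⟩ : a.eqLocus b) (a'.eqLocus b') := by
  have hu : IsUnit (algebraMap A A' f) := IsLocalization.Away.algebraMap_isUnit f
  constructor
  constructor
  · rintro ⟨_, n, rfl⟩
    rw [map_pow]
    apply IsUnit.pow
    obtain ⟨v, hv⟩ := hu.exists_right_inv
    have hv' : a' v = b' v := by
      have hub : IsUnit (b' (algebraMap A A' f)) := hu.map b'
      have hab : a' (algebraMap A A' f) = b' (algebraMap A A' f) := by rw [ha, hb, hf]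
      apply hub.mul_left_cancel
      rw [← map_mul, hv, ← hab, ← map_mul, hv, map_one, map_one]
    refine IsUnit.of_mul_eq_one ⟨v, hv'⟩ ?_
    apply Subtype.ext
    rw [Subring.coe_mul, hr]
    exact hv
  · rintro ⟨z, hz⟩
    replace hz : a' z = b' z := hz
    obtain ⟨n, x, hx⟩ := IsLocalization.Away.surj f z
    have h1 : algebraMap M M' (a x) = algebraMap M M' (b x) := by
      rw [← ha, ← hb, ← hx, map_mul, map_mul, hz, map_pow, map_pow, ha, hb, hf]
    obtain ⟨m, hm⟩ := IsLocalization.Away.exists_of_eq (b f) h1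
    refine ⟨⟨⟨f ^ m * x, ?_⟩, ⟨⟨f, hf⟩ ^ (n + m), n + m, rfl⟩⟩, ?_⟩
    · change a _ = b _
      rw [map_mul, map_mul, map_pow, map_pow, hf, hm]
    · apply Subtype.ext
      rw [Subring.coe_mul, hr, hr]
      simp only [Subring.coe_pow, map_mul, map_pow, ← hx]
      ring
  · intro x y hxy
    have h1 : algebraMap A A' x = algebraMap A A' y := by rw [← hr, ← hr, hxy]
    obtain ⟨m, hm⟩ := IsLocalization.Away.exists_of_eq f h1
    exact ⟨⟨⟨f, hf⟩ ^ m, m, rfl⟩, Subtype.ext (by simpa using hm)⟩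

theorem pow_eq_of_nilp {p : ℕ} [Fact p.Prime] {R : Type u} [CommRing R] (hp : (p : R) = 0)
    (x y : R) (h : IsNilpotent (x - y)) : ∃ n : ℕ, x ^ p ^ n = y ^ p ^ n := by
  rcases subsingleton_or_nontrivial R with hR | hR
  · exact ⟨0, Subsingleton.elim _ _⟩
  have hc : CharP R p := by
    obtain ⟨q, hq⟩ := CharP.exists R
    have h1 := (CharP.cast_eq_zero_iff R q p).mp hp
    rcases (Nat.dvd_prime Fact.out).mp h1 with h2 | h2
    · exact absurd h2 (CharP.char_ne_one R q)
    · exact h2 ▸ hq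
  obtain ⟨n, hn⟩ := h
  refine ⟨n, ?_⟩
  rw [← sub_eq_zero, ← sub_pow_char_pow]
  exact pow_eq_zero_of_le (Nat.lt_pow_self (Fact.out : p.Prime).one_lt).le hn

section
variable {R X : Scheme.{u}} (a b : R ⟶ X) (hab : ∀ r : R, a r = b r)

theorem pre_le (hab : ∀ r : R, a r = b r) (U : X.Opens) : b ⁻¹ᵁ U ≤ a ⁻¹ᵁ U := by
  intro r hr
  change a r ∈ U
  rw [hab]
  exact hr

/-- The invariant sections over `U`. -/
abbrev invSec (U : X.Opens) : Subring Γ(X, U) :=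
  RingHom.eqLocus (a.appLE U (b ⁻¹ᵁ U) (pre_le a b hab U)).hom (b.appLE U (b ⁻¹ᵁ U) le_rfl).hom

theorem mem_inv {U : X.Opens} {x : Γ(X, U)} : x ∈ invSec a b hab U ↔
    (a.appLE U (b ⁻¹ᵁ U) (pre_le a b hab U)).hom x = (b.appLE U (b ⁻¹ᵁ U) le_rfl).hom x := Iff.rfl

theorem appLE_res (a : R ⟶ X) {U V : X.Opens} {U' V' : R.Opens} (e : V' ≤ a ⁻¹ᵁ V)
    (e' : U' ≤ a ⁻¹ᵁ U)
    (i : U ⟶ V) (i' : U' ⟶ V') (x : Γ(X, V)) :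
    (a.appLE U U' e').hom ((X.presheaf.map i.op).hom x) =
      (R.presheaf.map i'.op).hom ((a.appLE V V' e).hom x) := by
  rw [← CommRingCat.comp_apply, ← CommRingCat.comp_apply, Scheme.Hom.appLE_map,
    Scheme.Hom.map_appLE]

theorem res_inv {U V : X.Opens} (i : U ⟶ V) (x : Γ(X, V)) (hx : x ∈ invSec a b hab V) :
    (X.presheaf.map i.op).hom x ∈ invSec a b hab U := by
  have i' : b ⁻¹ᵁ U ⟶ b ⁻¹ᵁ V := homOfLE fun r hr => i.le hr
  rw [mem_inv] at hx ⊢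
  rw [appLE_res a (pre_le a b hab V) _ i i', appLE_res b le_rfl _ i i', hx]

/-- The presheaf of invariant sections. -/
def invPre : X.Opensᵒᵖ ⥤ CommRingCat.{u} where
  obj U := .of (invSec a b hab U.unop)
  map {V U} i := CommRingCat.ofHom
    ((X.presheaf.map i).hom.restrict (invSec a b hab V.unop) (invSec a b hab U.unop)
      fun x hx => res_inv a b hab i.unop x hx)
  map_id U := by
    ext x
    change (X.presheaf.map (𝟙 _)).hom x.1 = x.1
    rw [X.presheaf.map_id]
    rfl
  map_comp f g := by
    ext x
    change (X.presheaf.map (f ≫ g)).hom x.1 = (X.presheaf.map g).hom ((X.presheaf.map f).hom x.1)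
    rw [X.presheaf.map_comp]
    rfl

/-- Inclusion of the invariant sections. -/
def invIncl : invPre a b hab ⟶ X.presheaf where
  app U := CommRingCat.ofHom (invSec a b hab U.unop).subtype
  naturality U V f := by
    ext x
    rfl

end

end IQ

namespace IQ

section
variable {R X : Scheme.{u}} (a b : R ⟶ X) (e : X ⟶ R)

theorem agree_pts (hea : e ≫ a = 𝟙 X) (heb : e ≫ b = 𝟙 X)
    [Surjective e] (r : R) : a r = b r := by
  obtain ⟨x, rfl⟩ := e.surjective r
  rw [← Scheme.Hom.comp_apply, ← Scheme.Hom.comp_apply, hea, heb]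

theorem pow_mem_inv (hea : e ≫ a = 𝟙 X) (heb : e ≫ b = 𝟙 X)
    [Surjective e] [IsAffineHom b] {p : ℕ} [Fact p.Prime]
    (hab : ∀ r : R, a r = b r)
    {U : X.Opens} (hU : IsAffineOpen U) (hp : (p : Γ(X, U)) = 0) (x : Γ(X, U)) :
    ∃ n : ℕ, x ^ p ^ n ∈ invSec a b hab U := by
  have hp' : (p : Γ(R, b ⁻¹ᵁ U)) = 0 := by
    have := congrArg (b.appLE U (b ⁻¹ᵁ U) le_rfl).hom hp
    rwa [map_natCast, map_zero] at this
  set y := (a.appLE U (b ⁻¹ᵁ U) (pre_le a b hab U)).hom x - (b.appLE U (b ⁻¹ᵁ U) le_rfl).hom x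
    with hy
  have h0 : (e.app (b ⁻¹ᵁ U)).hom y = 0 := by
    rw [hy, map_sub, Scheme.Hom.app_eq_appLE, ← CommRingCat.comp_apply, ← CommRingCat.comp_apply,
      Scheme.Hom.appLE_comp_appLE, Scheme.Hom.appLE_comp_appLE]
    simp only [hea, heb, sub_self]
  have hnil : IsNilpotent y := by
    rw [Scheme.isNilpotent_iff_basicOpen_eq_bot_of_isCompact (hU.preimage b).isCompact]
    rw [eq_bot_iff]
    intro r hr
    obtain ⟨s, rfl⟩ := e.surjective r
    have hs : s ∈ e ⁻¹ᵁ (R.basicOpen y) := hr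
    rw [Scheme.preimage_basicOpen] at hs
    have h0' : (e.app (b ⁻¹ᵁ U)) y = 0 := h0
    rw [h0', Scheme.basicOpen_zero] at hs
    exact hs.elim
  obtain ⟨n, hn⟩ := pow_eq_of_nilp hp' _ _ hnil
  refine ⟨n, ?_⟩
  rw [mem_inv, map_pow, map_pow, hn]

theorem invMap_open (p : ℕ) [Fact p.Prime] [IsAffineHom b] (hab : ∀ r : R, a r = b r)
    {V : X.Opens} (hV : IsAffineOpen V) (f : Γ(X, V))
    (hf : f ∈ invSec a b hab V) {U : X.Opens} (hU : U = X.basicOpen f) (i : U ⟶ V) :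
    IsOpenImmersion (Spec.map ((invPre a b hab).map i.op)) := by
  have i' : b ⁻¹ᵁ U ⟶ b ⁻¹ᵁ V := homOfLE fun r hr => i.le hr
  have hU' : b ⁻¹ᵁ U = R.basicOpen ((b.appLE V (b ⁻¹ᵁ V) le_rfl).hom f) := by
    rw [hU, Scheme.preimage_basicOpen, Scheme.Hom.app_eq_appLE]
  let _ : Algebra Γ(X, V) Γ(X, U) := (X.presheaf.map i.op).hom.toAlgebra
  let _ : Algebra Γ(R, b ⁻¹ᵁ V) Γ(R, b ⁻¹ᵁ U) := (R.presheaf.map i'.op).hom.toAlgebra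
  have h1 : IsLocalization.Away f Γ(X, U) := hV.isLocalization_of_eq_basicOpen f i hU
  have h2 : IsLocalization.Away ((b.appLE V (b ⁻¹ᵁ V) le_rfl).hom f) Γ(R, b ⁻¹ᵁ U) :=
    (hV.preimage b).isLocalization_of_eq_basicOpen _ i' hU'
  let _ : Algebra (invSec a b hab V) (invSec a b hab U) :=
    ((invPre a b hab).map i.op).hom.toAlgebra
  have h3 : IsLocalization.Away (⟨f, hf⟩ : invSec a b hab V) (invSec a b hab U) :=
    eqLocus_loc (a.appLE V (b ⁻¹ᵁ V) (pre_le a b hab V)).hom (b.appLE V (b ⁻¹ᵁ V) le_rfl).hom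
      (a.appLE U (b ⁻¹ᵁ U) (pre_le a b hab U)).hom (b.appLE U (b ⁻¹ᵁ U) le_rfl).hom
      (fun x => appLE_res a _ _ i i' x) (fun x => appLE_res b _ _ i i' x) f hf (fun x => rfl)
  exact IsOpenImmersion.of_isLocalization (S := invSec a b hab U) (⟨f, hf⟩ : invSec a b hab V)

theorem exists_quot [Surjective e] [IsAffineHom b] (p : ℕ) [Fact p.Prime]
    (hea : e ≫ a = 𝟙 X) (heb : e ≫ b = 𝟙 X)
    (hp : ∀ U : X.Opens, (p : Γ(X, U)) = 0) :
    ∃ (Q : Scheme.{u}) (φ : X ⟶ Q), a ≫ φ = b ≫ φ ∧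
      ∀ q : Q, ∃ c : Chart p a b φ, q ∈ Set.range c.ι := by
  have hab := agree_pts a b e hea heb
  let F : X.AffineZariskiSite ⥤ Scheme.{u} :=
    Scheme.AffineZariskiSite.toOpensFunctor X ⋙ (invPre a b hab).rightOp ⋙ Scheme.Spec
  let π : diag X ⟶ F := Functor.whiskerLeft _ (Functor.whiskerRight
    (NatTrans.rightOp (invIncl a b hab)) Scheme.Spec)
  have hF : ∀ {U V : X.AffineZariskiSite} (f : U ⟶ V), IsOpenImmersion (F.map f) := by
    intro U V g
    obtain ⟨f, hf⟩ := leOfHom g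
    obtain ⟨n, hn⟩ := pow_mem_inv a b e hea heb hab V.2 (hp _) f
    refine invMap_open a b p hab V.2 (f ^ p ^ n) hn ?_
      (homOfLE (Scheme.AffineZariskiSite.toOpens_mono (leOfHom g)))
    rw [Scheme.basicOpen_pow _ _ (pow_pos (Fact.out : p.Prime).pos n)]
    exact hf.symm
  have hπ : ∀ U, Function.Bijective (π.app U) := by
    intro U
    refine (PrimeSpectrum.isHomeomorph_comap (invSec a b hab U.1).subtype ?_ ?_).bijective
    · intro x
      obtain ⟨n, hn⟩ := pow_mem_inv a b e hea heb hab U.2 (hp _) x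
      exact ⟨p ^ n, pow_pos (Fact.out : p.Prime).pos n, ⟨_, hn⟩, rfl⟩
    · rw [(RingHom.injective_iff_ker_eq_bot (invSec a b hab U.1).subtype).mp
        (Subring.subtype_injective _)]
      exact bot_le
  obtain ⟨Q, φ, ι, hι, hpb, hcov⟩ := glue_quot F π hF hπ
  let c : ∀ U : X.AffineZariskiSite, Chart p a b φ := fun U =>
    { A₀ := .of (invSec a b hab U.1)
      A := Γ(X, U.1)
      M := Γ(R, b ⁻¹ᵁ U.1)
      i := CommRingCat.ofHom (invSec a b hab U.1).subtype
      a' := a.appLE U.1 (b ⁻¹ᵁ U.1) (pre_le a b hab U.1)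
      b' := b.appLE U.1 (b ⁻¹ᵁ U.1) le_rfl
      inj := Subring.subtype_injective _
      comm := by
        ext x
        exact x.2
      equ := fun x hx => ⟨⟨x, hx⟩, rfl⟩
      char := Subtype.ext (by simpa using hp U.1)
      pow := fun x => by
        obtain ⟨n, hn⟩ := pow_mem_inv a b e hea heb hab U.2 (hp _) x
        exact ⟨n, ⟨_, hn⟩, rfl⟩
      ι := ι U
      oi := hι U
      jA := U.2.fromSpec
      pb := hpb U
      jM := (U.2.preimage b).fromSpec
      ha := IsAffineOpen.SpecMap_appLE_fromSpec _ _ _ _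
      hb := IsAffineOpen.SpecMap_appLE_fromSpec _ _ _ _ }
  refine ⟨Q, φ, ?_, fun q => ?_⟩
  · refine Scheme.hom_ext_of_forall _ _ fun r => ?_
    obtain ⟨U, hU, hxU, -⟩ := exists_isAffineOpen_mem_and_subset (x := b r) (U := ⊤) trivial
    refine ⟨b ⁻¹ᵁ U, hxU, ?_⟩
    have hW : IsAffineOpen (b ⁻¹ᵁ U) := hU.preimage b
    let C := c ⟨U, hU⟩
    have h1 : hW.fromSpec ≫ a ≫ φ = hW.fromSpec ≫ b ≫ φ := by
      have e1 : C.jM ≫ a ≫ φ = C.jM ≫ b ≫ φ := by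
        rw [← reassoc_of% C.ha, ← reassoc_of% C.hb, C.pb.w, ← Spec.map_comp_assoc,
          ← Spec.map_comp_assoc, C.comm]
      exact e1
    rw [← cancel_epi hW.isoSpec.inv]
    exact h1
  · obtain ⟨U, hU⟩ := hcov q
    exact ⟨c U, hU⟩

end
end IQ

namespace IQ

theorem char_sections {k : Type u} [Field k] (p : ℕ) [CharP k p] {X : Scheme.{u}} (s : X ⟶ Spk k)
    (U : X.Opens) : (p : Γ(X, U)) = 0 := by
  have h1 : (p : (CommRingCat.of k)) = 0 := CharP.cast_eq_zero k p
  have h2 := congrArg (s.appLE ⊤ U le_top).hom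
    (congrArg (Scheme.ΓSpecIso (CommRingCat.of k)).inv.hom h1)
  rwa [map_natCast, map_zero, map_natCast, map_zero] at h2

theorem cat_bc {k : Type u} [Field k] (p : ℕ) [Fact p.Prime] [CharP k p]
    {I : GroupSchemeOver k} (hI : I.IsInfinitesimal) {X : SchemeOver k} (α : ActionOver I X)
    {Q : SchemeOver k} {φ : X.carrier ⟶ Q.carrier} (hQ : IsCatQuotient α Q φ)
    {Q' X' : Scheme.{u}} (g : Q' ⟶ Q.carrier) [Flat g] (g' : X' ⟶ X.carrier) (φ' : X' ⟶ Q')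
    (hpb : IsPullback g' φ' φ g) {Z : Scheme.{u}} (s : X' ⟶ Z)
    (hs : ∀ (T : Scheme.{u}) (x x' : T ⟶ X') (i : T ⟶ I.carrier)
      (h : i ≫ I.str = (x ≫ g') ≫ X.str), x ≫ φ' = x' ≫ φ' →
      x' ≫ g' = α.act i (x ≫ g') h → x' ≫ s = x ≫ s) :
    ∃! t : Q' ⟶ Z, φ' ≫ t = s := by
  obtain ⟨-, hfin, hui⟩ := hI
  obtain ⟨hQ1, hQ2, hQ3⟩ := hQ
  let R := pullback I.str X.str
  let b : R ⟶ X.carrier := pullback.snd I.str X.str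
  let a : R ⟶ X.carrier := α.act (pullback.fst I.str X.str) (pullback.snd I.str X.str)
    pullback.condition
  have he : (X.str ≫ I.one) ≫ I.str = 𝟙 X.carrier ≫ X.str := by
    rw [Category.assoc, I.one_str, Category.comp_id, Category.id_comp]
  let e : X.carrier ⟶ R := pullback.lift (X.str ≫ I.one) (𝟙 _) he
  have heb : e ≫ b = 𝟙 _ := pullback.lift_snd _ _ _
  have hef : e ≫ pullback.fst I.str X.str = X.str ≫ I.one := pullback.lift_fst _ _ _
  have hea : e ≫ a = 𝟙 _ := by
    refine (α.act_natural _ _ _ _ ?_).trans ((α.act_congr (hef.trans ?_) heb _ ?_).trans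
      (α.one_act (𝟙 _) ?_))
    · simp only [Category.assoc, pullback.condition]
    · rw [Category.id_comp]
    · simpa using he
    · simpa using he
  have hra : ∀ {T : Scheme.{u}} (r : T ⟶ R) (h), r ≫ a =
      α.act (r ≫ pullback.fst I.str X.str) (r ≫ b) h := fun r h => α.act_natural _ _ _ _ _
  have hrr : ∀ {T : Scheme.{u}} (r : T ⟶ R),
      (r ≫ pullback.fst I.str X.str) ≫ I.str = (r ≫ b) ≫ X.str := fun r => by
    simp only [b, Category.assoc, pullback.condition]
  have hbaff : IsAffineHom b := inferInstanceAs (IsAffineHom (pullback.snd I.str X.str))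
  have hbui : Function.Injective b :=
    hui.universally_injective _ _ _ (IsPullback.of_hasPullback I.str X.str).flip
  have hes : Surjective e := by
    constructor
    intro r
    refine ⟨b r, hbui ?_⟩
    rw [← Scheme.Hom.comp_apply, heb]
    rfl
  obtain ⟨Q₀, φ₀, hab, hcov⟩ := exists_quot a b e p hea heb (char_sections p X.str)
  have hbase : ∀ {W : Scheme.{u}} (w : X.carrier ⟶ W), a ≫ w = b ≫ w → ∃! t, φ₀ ≫ t = w := by
    intro W w hw
    refine flat_bc p a b φ₀ hcov (𝟙 Q₀) (𝟙 _) φ₀ (IsPullback.of_id_snd.flip) w ?_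
    intro T x x' _ r h1 h2
    rw [Category.comp_id] at h1 h2
    rw [← h1, ← h2, Category.assoc, Category.assoc, hw]
  obtain ⟨str₀, hstr₀, -⟩ := hbase X.str (α.act_str _ _ _)
  obtain ⟨w, hw, -⟩ := hbase φ (hQ2 _ _ _)
  obtain ⟨v, hv, -⟩ := hQ3 ⟨Q₀, str₀⟩ φ₀ hstr₀ (fun i x h => by
    have h1 := congrArg (fun t => pullback.lift i x h ≫ t) hab
    simp only [← Category.assoc] at h1
    rw [hra _ (hrr _)] at h1
    have h2 : pullback.lift i x h ≫ b = x := pullback.lift_snd _ _ _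
    rw [α.act_congr (pullback.lift_fst _ _ _) h2 _ h, h2] at h1
    exact h1)
  have hvw : v ≫ w = 𝟙 _ := by
    refine (hQ3 Q φ hQ1 hQ2).unique ?_ (Category.comp_id _)
    rw [reassoc_of% hv, hw]
  have hwv : w ≫ v = 𝟙 _ := by
    refine (hbase φ₀ hab).unique ?_ (Category.comp_id _)
    rw [reassoc_of% hw, hv]
  have hiso : IsIso v := ⟨w, hvw, hwv⟩
  have hpb' : IsPullback g' φ' φ₀ (g ≫ v) := by
    refine hpb.of_iso (Iso.refl _) (Iso.refl _) (Iso.refl _) (asIso v) ?_ ?_ ?_ ?_ <;> simp [hv]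
  refine flat_bc p a b φ₀ hcov (g ≫ v) g' φ' hpb' s ?_
  intro T x x' hxx r h1 h2
  refine hs T x' x (r ≫ pullback.fst I.str X.str) (by rw [hrr, h2]) hxx.symm ?_
  rw [← h1, hra _ (hrr r)]
  exact α.act_congr rfl h2 _ _

end IQ

namespace IQ

theorem cat_epi {k : Type u} [Field k] (p : ℕ) [Fact p.Prime] [CharP k p]
    {I : GroupSchemeOver k} (hI : I.IsInfinitesimal) {X : SchemeOver k} (α : ActionOver I X)
    {Q : SchemeOver k} {φ : X.carrier ⟶ Q.carrier} (hQ : IsCatQuotient α Q φ)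
    {Q' X' : Scheme.{u}} (g : Q' ⟶ Q.carrier) [Flat g] (g' : X' ⟶ X.carrier) (φ' : X' ⟶ Q')
    (hpb : IsPullback g' φ' φ g) : Epi φ' := by
  constructor
  intro Z v v' h
  refine (cat_bc p hI α hQ g g' φ' hpb (φ' ≫ v) ?_).unique rfl h.symm
  intro T x x' i _ hx _
  rw [reassoc_of% hx]

instance flat_over {k : Type u} [Field k] {X : Scheme.{u}} (f : X ⟶ Spk k) : Flat f := by
  have : IsIntegral (Spk k) := inferInstanceAs (IsIntegral (Spec (CommRingCat.of k)))
  have : Subsingleton (Spk k) := inferInstanceAs (Subsingleton (PrimeSpectrum k))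
  infer_instance

theorem main_aux {k : Type u} [Field k] (p : ℕ) [Fact p.Prime] [CharP k p]
    {I J : GroupSchemeOver k} (hI : I.IsInfinitesimal) (hJ : J.IsInfinitesimal)
    {X Y : SchemeOver k} (αX : ActionOver I X) (αY : ActionOver J Y)
    {QX : SchemeOver k} {φX : X.carrier ⟶ QX.carrier} (hQX : IsCatQuotient αX QX φX)
    {QY : SchemeOver k} {φY : Y.carrier ⟶ QY.carrier} (hQY : IsCatQuotient αY QY φY)
    (m : pullback X.str Y.str ⟶ pullback QX.str QY.str)
    (hm1 : m ≫ pullback.fst QX.str QY.str = pullback.fst X.str Y.str ≫ φX)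
    (hm2 : m ≫ pullback.snd QX.str QY.str = pullback.snd X.str Y.str ≫ φY) :
    Epi m ∧ ∀ {Z : Scheme.{u}} (s : pullback X.str Y.str ⟶ Z),
      (∀ {T : Scheme.{u}} (w w' : T ⟶ pullback X.str Y.str) (i : T ⟶ I.carrier)
        (j : T ⟶ J.carrier) (h h'),
        w' ≫ pullback.fst X.str Y.str = αX.act i (w ≫ pullback.fst X.str Y.str) h →
        w' ≫ pullback.snd X.str Y.str = αY.act j (w ≫ pullback.snd X.str Y.str) h' →
        w' ≫ s = w ≫ s) → ∃ t, m ≫ t = s := by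
  have hφX : φX ≫ QX.str = X.str := hQX.1
  have hφY : φY ≫ QY.str = Y.str := hQY.1
  let B := pullback QX.str Y.str
  let b1 : B ⟶ QX.carrier := pullback.fst QX.str Y.str
  let b2 : B ⟶ Y.carrier := pullback.snd QX.str Y.str
  have hb : b1 ≫ QX.str = b2 ≫ Y.str := pullback.condition
  let f1 : pullback X.str Y.str ⟶ B := pullback.lift (pullback.fst X.str Y.str ≫ φX)
    (pullback.snd X.str Y.str) (by rw [Category.assoc, hφX, pullback.condition])
  have hf11 : f1 ≫ b1 = pullback.fst X.str Y.str ≫ φX := pullback.lift_fst _ _ _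
  have hf12 : f1 ≫ b2 = pullback.snd X.str Y.str := pullback.lift_snd _ _ _
  let f2 : B ⟶ pullback QX.str QY.str := pullback.lift b1 (b2 ≫ φY)
    (by rw [Category.assoc, hφY, hb])
  have hf21 : f2 ≫ pullback.fst QX.str QY.str = b1 := pullback.lift_fst _ _ _
  have hf22 : f2 ≫ pullback.snd QX.str QY.str = b2 ≫ φY := pullback.lift_snd _ _ _
  have hm : f1 ≫ f2 = m := by
    apply pullback.hom_ext
    · rw [Category.assoc, hf21, hf11, hm1]
    · rw [Category.assoc, hf22, reassoc_of% hf12, hm2]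
  have pb1 : IsPullback (pullback.fst X.str Y.str) f1 φX b1 := by
    refine (IsPullback.of_right (h₁₂ := b2) (h₂₂ := QX.str) (v₁₃ := Y.str) ?_ hf11
      (IsPullback.of_hasPullback _ _).flip).flip
    rw [hf12, hφX]
    exact (IsPullback.of_hasPullback _ _).flip
  have pb2 : IsPullback b2 f2 φY (pullback.snd QX.str QY.str) := by
    refine (IsPullback.of_right (h₁₂ := pullback.fst QX.str QY.str) (h₂₂ := QY.str)
      (v₁₃ := QX.str) ?_ hf22 (IsPullback.of_hasPullback _ _)).flip
    rw [hf21, hφY]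
    exact (IsPullback.of_hasPullback _ _)
  have fb1 : Flat b1 := inferInstanceAs (Flat (pullback.fst QX.str Y.str))
  have e1 : Epi f1 := cat_epi p hI αX hQX b1 _ f1 pb1
  have e2 : Epi f2 := cat_epi p hJ αY hQY _ _ f2 pb2
  refine ⟨hm ▸ inferInstance, ?_⟩
  intro Z s hs
  -- the first factorisation
  obtain ⟨v, hv, -⟩ := cat_bc p hI αX hQX b1 _ f1 pb1 s (by
    intro T x x' i h hx hx'
    have h2 : x' ≫ pullback.snd X.str Y.str = x ≫ pullback.snd X.str Y.str := by
      rw [← hf12, reassoc_of% hx]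
    have h3 : ((x ≫ pullback.snd X.str Y.str) ≫ Y.str ≫ J.one) ≫ J.str =
        (x ≫ pullback.snd X.str Y.str) ≫ Y.str := by
      simp only [Category.assoc, J.one_str, Category.comp_id]
    exact hs x x' i _ h h3 hx' (h2.trans (αY.one_act _ h3).symm))
  -- invariance of the first factorisation
  let q : pullback J.str (b2 ≫ Y.str) ⟶ B := pullback.snd J.str (b2 ≫ Y.str)
  let j₀ : pullback J.str (b2 ≫ Y.str) ⟶ J.carrier := pullback.fst J.str (b2 ≫ Y.str)
  have hq : j₀ ≫ J.str = (q ≫ b2) ≫ Y.str := by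
    rw [Category.assoc]
    exact pullback.condition
  let q' : pullback J.str (b2 ≫ Y.str) ⟶ B := pullback.lift (q ≫ b1) (αY.act j₀ (q ≫ b2) hq)
    (by rw [αY.act_str, Category.assoc, Category.assoc, hb])
  have hq'1 : q' ≫ b1 = q ≫ b1 := pullback.lift_fst _ _ _
  have hq'2 : q' ≫ b2 = αY.act j₀ (q ≫ b2) hq := pullback.lift_snd _ _ _
  have fq : Flat q := inferInstanceAs (Flat (pullback.snd J.str (b2 ≫ Y.str)))
  have hqv : q' ≫ v = q ≫ v := by
    let y := pullback.fst f1 q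
    let t := pullback.snd f1 q
    have hyt : y ≫ f1 = t ≫ q := pullback.condition
    have pb3 : IsPullback (y ≫ pullback.fst X.str Y.str) t φX (q ≫ b1) :=
      (IsPullback.of_hasPullback f1 q).flip.paste_vert pb1.flip |>.flip
    have e3 : Epi t := cat_epi p hI αX hQX (q ≫ b1) _ t pb3
    have hy2 : t ≫ q ≫ b2 = y ≫ pullback.snd X.str Y.str := by
      rw [← hf12, reassoc_of% hyt]
    have hj : (t ≫ j₀) ≫ J.str = (y ≫ pullback.snd X.str Y.str) ≫ Y.str := by
      rw [← hy2, Category.assoc, hq]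
      simp only [Category.assoc]
    let y' : pullback f1 q ⟶ pullback X.str Y.str :=
      pullback.lift (y ≫ pullback.fst X.str Y.str) (αY.act (t ≫ j₀) (y ≫ pullback.snd X.str Y.str)
        hj) (by rw [αY.act_str, Category.assoc, Category.assoc, pullback.condition])
    have hy'1 : y' ≫ pullback.fst X.str Y.str = y ≫ pullback.fst X.str Y.str :=
      pullback.lift_fst _ _ _
    have hy'2 : y' ≫ pullback.snd X.str Y.str =
        αY.act (t ≫ j₀) (y ≫ pullback.snd X.str Y.str) hj := pullback.lift_snd _ _ _
    have hy' : y' ≫ f1 = t ≫ q' := by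
      apply pullback.hom_ext
      · change (y' ≫ f1) ≫ b1 = (t ≫ q') ≫ b1
        rw [Category.assoc, Category.assoc, hf11, hq'1, reassoc_of% hy'1, ← hf11,
          reassoc_of% hyt]
      · change (y' ≫ f1) ≫ b2 = (t ≫ q') ≫ b2
        rw [Category.assoc, Category.assoc, hf12, hq'2, hy'2]
        refine ((αY.act_natural _ _ _ _ ?_).trans (αY.act_congr rfl hy2 _ _)).symm
        rw [Category.assoc, hq]
        simp only [Category.assoc]
    have h3 : ((y ≫ pullback.fst X.str Y.str) ≫ X.str ≫ I.one) ≫ I.str =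
        (y ≫ pullback.fst X.str Y.str) ≫ X.str := by
      simp only [Category.assoc, I.one_str, Category.comp_id]
    have h4 := hs y y' _ (t ≫ j₀) h3 hj (hy'1.trans (αX.one_act _ h3).symm) hy'2
    rw [← cancel_epi t, ← reassoc_of% hy', hv, h4, ← hv, reassoc_of% hyt]
  -- the second factorisation
  obtain ⟨w, hw, -⟩ := cat_bc p hJ αY hQY _ _ f2 pb2 v (by
    intro T x x' j h hx hx'
    let z : T ⟶ pullback J.str (b2 ≫ Y.str) := pullback.lift j x (by rw [h, Category.assoc])
    have hzj : z ≫ j₀ = j := pullback.lift_fst _ _ _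
    have hzq : z ≫ q = x := pullback.lift_snd _ _ _
    have hzq' : z ≫ q' = x' := by
      apply pullback.hom_ext
      · change (z ≫ q') ≫ b1 = x' ≫ b1
        rw [Category.assoc, hq'1, reassoc_of% hzq, ← hf21, reassoc_of% hx]
      · change (z ≫ q') ≫ b2 = x' ≫ b2
        rw [Category.assoc, hq'2, hx']
        refine (αY.act_natural _ _ _ _ ?_).trans (αY.act_congr hzj (by rw [reassoc_of% hzq]) _ _)
        rw [Category.assoc, hq]
        simp only [Category.assoc]
    rw [← hzq', ← hzq, Category.assoc, Category.assoc, hqv])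
  exact ⟨w, by rw [← hm, Category.assoc, hw, hv]⟩

end IQ

/-- Let `k` be a field of characteristic `p > 0`, and let `X` (resp. `Y`) be
a scheme of finite type over `k` with an action of an infinitesimal group scheme `I` (resp.
`J`). Then `φ_{X,I} × φ_{Y,J} : X ×ₖ Y ⟶ X/I ×ₖ Y/J` factors uniquely through an isomorphism
`(X ×ₖ Y)/(I ×ₖ J) ≅ X/I ×ₖ Y/J`. Here the product group `P = I ×ₖ J` and its componentwise
action on `X ×ₖ Y` are presented relationally. -/
theorem product_of_infinitesimal_quotients
    {k : Type u} [Field k] (p : ℕ) [Fact p.Prime] [CharP k p]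
    (I J : GroupSchemeOver k) (hI : I.IsInfinitesimal) (hJ : J.IsInfinitesimal)
    (X Y : SchemeOver k) (hXft : X.IsFiniteType) (hYft : Y.IsFiniteType)
    (αX : ActionOver I X) (αY : ActionOver J Y)
    -- the product group `P = I ×ₖ J`:
    (P : GroupSchemeOver k) (pI : GroupHom P I) (pJ : GroupHom P J)
    (hPpb : IsPullback pI.hom pJ.hom I.str J.str)
    -- the componentwise action of `P` on `X ×ₖ Y`:
    (αXY : ActionOver P ⟨pullback X.str Y.str, pullback.fst X.str Y.str ≫ X.str⟩)
    (hcompat₁ : ∀ {T : Scheme.{u}} (g : T ⟶ P.carrier) (w : T ⟶ pullback X.str Y.str)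
      (h h'), αXY.act g w h ≫ pullback.fst X.str Y.str =
        αX.act (g ≫ pI.hom) (w ≫ pullback.fst X.str Y.str) h')
    (hcompat₂ : ∀ {T : Scheme.{u}} (g : T ⟶ P.carrier) (w : T ⟶ pullback X.str Y.str)
      (h h'), αXY.act g w h ≫ pullback.snd X.str Y.str =
        αY.act (g ≫ pJ.hom) (w ≫ pullback.snd X.str Y.str) h')
    -- the three categorical quotients:
    (QX : SchemeOver k) (φX : X.carrier ⟶ QX.carrier) (hQX : IsCatQuotient αX QX φX)
    (QY : SchemeOver k) (φY : Y.carrier ⟶ QY.carrier) (hQY : IsCatQuotient αY QY φY)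
    (QXY : SchemeOver k) (φXY : pullback X.str Y.str ⟶ QXY.carrier)
    (hQXY : IsCatQuotient αXY QXY φXY) :
    ∀ prodMor : pullback X.str Y.str ⟶ pullback QX.str QY.str,
      prodMor ≫ pullback.fst QX.str QY.str = pullback.fst X.str Y.str ≫ φX →
      prodMor ≫ pullback.snd QX.str QY.str = pullback.snd X.str Y.str ≫ φY →
      ∃ θ : QXY.carrier ⟶ pullback QX.str QY.str,
        IsIso θ ∧ φXY ≫ θ = prodMor ∧
        ∀ θ' : QXY.carrier ⟶ pullback QX.str QY.str, φXY ≫ θ' = prodMor → θ' = θ := by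
  intro m hm1 hm2
  obtain ⟨hepi, hfac⟩ := IQ.main_aux p hI hJ αX αY hQX hQY m hm1 hm2
  have hstrP : ∀ {T : Scheme.{u}} (g : T ⟶ P.carrier) (w : T ⟶ pullback X.str Y.str),
      g ≫ P.str = w ≫ pullback.fst X.str Y.str ≫ X.str →
      (g ≫ pI.hom) ≫ I.str = (w ≫ pullback.fst X.str Y.str) ≫ X.str := by
    intro T g w h
    rw [Category.assoc, pI.hom_str, h, Category.assoc]
  have hstrP' : ∀ {T : Scheme.{u}} (g : T ⟶ P.carrier) (w : T ⟶ pullback X.str Y.str),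
      g ≫ P.str = w ≫ pullback.fst X.str Y.str ≫ X.str →
      (g ≫ pJ.hom) ≫ J.str = (w ≫ pullback.snd X.str Y.str) ≫ Y.str := by
    intro T g w h
    rw [Category.assoc, pJ.hom_str, h, Category.assoc, pullback.condition]
  obtain ⟨w, hw⟩ := hfac φXY (by
    intro T x x' i j h h' h1 h2
    have hij : i ≫ I.str = j ≫ J.str := by
      rw [h, h', Category.assoc, Category.assoc, pullback.condition]
    let g : T ⟶ P.carrier := hPpb.lift i j hij
    have hgi : g ≫ pI.hom = i := hPpb.lift_fst _ _ _
    have hgj : g ≫ pJ.hom = j := hPpb.lift_snd _ _ _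
    have hg : g ≫ P.str = x ≫ pullback.fst X.str Y.str ≫ X.str := by
      rw [← pI.hom_str, reassoc_of% hgi, h, Category.assoc]
    have hx : x' = αXY.act g x hg := by
      apply pullback.hom_ext
      · rw [h1, hcompat₁ g x hg (hstrP g x hg)]
        exact αX.act_congr hgi.symm rfl _ _
      · rw [h2, hcompat₂ g x hg (hstrP' g x hg)]
        exact αY.act_congr hgj.symm rfl _ _
    rw [hx]
    exact hQXY.2.1 g x hg)
  have hex := hQXY.2.2 ⟨pullback QX.str QY.str, pullback.fst QX.str QY.str ≫ QX.str⟩ m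
    (by
      change m ≫ pullback.fst QX.str QY.str ≫ QX.str = pullback.fst X.str Y.str ≫ X.str
      rw [reassoc_of% hm1, hQX.1])
    (by
      intro T g x h
      apply pullback.hom_ext
      · rw [Category.assoc, Category.assoc, hm1,
          reassoc_of% (hcompat₁ g x h (hstrP g x h)), hQX.2.1, Category.assoc]
      · rw [Category.assoc, Category.assoc, hm2,
          reassoc_of% (hcompat₂ g x h (hstrP' g x h)), hQY.2.1, Category.assoc])
  obtain ⟨θ, hθ, hun⟩ := hex
  have h1 : θ ≫ w = 𝟙 _ := by
    refine (hQXY.2.2 QXY φXY hQXY.1 hQXY.2.1).unique ?_ (Category.comp_id _)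
    rw [reassoc_of% hθ, hw]
  have h2 : w ≫ θ = 𝟙 _ := by
    rw [← cancel_epi m, reassoc_of% hw, hθ, Category.comp_id]
  exact ⟨θ, ⟨w, h1, h2⟩, hθ, fun θ' h' => hun θ' h'⟩
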